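/- arXiv:1402.6261 — 2 statements merged into one kernel-verified Lean document; each statement's English description precedes it below -/
import Mathlib

section
/- For every matching τ of [2n], ℓ(g_τ) = 2(n(n−1)/2 − c(τ)). Moreover, for matchings τ and τ′ of [2n], g_τ ≤ g_{τ′} in the affine Bruhat order if and only if τ′ ≤ τ in the uncrossing order. -/
open Finset

noncomputable section
open scoped Classical

/-- The cyclic (clockwise) half-open interval `(a, b]` in `Fin m`. -/
def cIoc {m : ℕ} (a b : Fin m) : Finset (Fin m) :=
  univ.filter fun k => if a < b then a < k ∧ k ≤ b else a < k ∨ k ≤ b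

/-- The open cyclic (clockwise) arc from `a` to `b` in `Fin m`, excluding both endpoints. -/
def cIoo {m : ℕ} (a b : Fin m) : Finset (Fin m) :=
  univ.filter fun k => if a < b then a < k ∧ k < b else (a < k ∨ k < b) ∧ k ≠ a ∧ k ≠ b

/-- Set partitions of `[n] = Fin n`. -/
abbrev NCP (n : ℕ) := Finpartition (univ : Finset (Fin n))

/-- `a` and `b` lie in the same block of `σ`. -/
def sameBlock {n : ℕ} (σ : NCP n) (a b : Fin n) : Prop :=
  ∃ B ∈ σ.parts, a ∈ B ∧ b ∈ B

/-- `σ` is a noncrossing partition: there are no `a < b < c < d` with `a, c` in one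
block and `b, d` in a different block. -/
def IsNoncrossing {n : ℕ} (σ : NCP n) : Prop :=
  ∀ a b c d : Fin n, a < b → b < c → c < d →
    sameBlock σ a c → sameBlock σ b d → sameBlock σ a b

/-- The relation defining the dual (Kreweras complement) partition: `ĩ ~ j̃` iff no block
of `σ` meets both cyclic intervals `{(i+1), …, j}` and `{(j+1), …, i}`. -/
def dualRel {n : ℕ} (σ : NCP n) (i j : Fin n) : Prop :=
  i = j ∨ ¬ ∃ B ∈ σ.parts, (B ∩ cIoc i j).Nonempty ∧ (B ∩ cIoc j i).Nonempty

/-- The point `ī` of `[2n]` (0-based: `ī = 2i`). -/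
def bar {n : ℕ} (i : Fin n) : Fin (2*n) := ⟨2*(i:ℕ), by have := i.isLt; omega⟩

/-- The point `ĩ` of `[2n]` (0-based: `ĩ = 2i+1`). -/
def til {n : ℕ} (i : Fin n) : Fin (2*n) := ⟨2*(i:ℕ)+1, by have := i.isLt; omega⟩

/-- A matching (fixed-point-free involution) of `Fin m`. -/
def IsMatching {m : ℕ} (τ : Fin m → Fin m) : Prop :=
  Function.Involutive τ ∧ ∀ i, τ i ≠ i

/-- A noncrossing matching: there are no `a < b < c < d` with `τ a = c` and `τ b = d`. -/
def IsNCMatching {m : ℕ} (τ : Fin m → Fin m) : Prop :=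
  ¬ ∃ a b c d : Fin m, a < b ∧ b < c ∧ c < d ∧ τ a = c ∧ τ b = d

/-- `j` is the cyclic predecessor of `i` in the block of `σ` containing `i`
(`j = i` when `i` is a singleton). -/
def cyclicPred {n : ℕ} (σ : NCP n) (j i : Fin n) : Prop :=
  ∃ B ∈ σ.parts, i ∈ B ∧ j ∈ B ∧ ∀ x ∈ B, x ∉ cIoo j i

/-- `m` is the medial pairing of `σ`: it pairs `ī` (0-based `2i`) with `j̃` (0-based `2j+1`),
where `j` is the cyclic predecessor of `i` in its block. -/
def IsMedialOf {n : ℕ} (σ : NCP n) (m : Fin (2*n) → Fin (2*n)) : Prop :=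
  ∀ i j : Fin n, m (bar i) = til j ↔ cyclicPred σ j i

/-- The crossing number of a matching: the number of pairs `{a,b}` with
`a < b < τ a < τ b`. -/
def crossNum {m : ℕ} (τ : Fin m → Fin m) : ℕ :=
  ((univ : Finset (Fin m × Fin m)).filter fun p =>
    p.1 < p.2 ∧ p.2 < τ p.1 ∧ τ p.1 < τ p.2).card

/-- `a`, `b`, `c`, `d` are distinct and in cyclic order on `Fin m`. -/
def CyclicOrder4 {m : ℕ} (a b c d : Fin m) : Prop :=
  (a < b ∧ b < c ∧ c < d) ∨ (b < c ∧ c < d ∧ d < a) ∨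
  (c < d ∧ d < a ∧ a < b) ∨ (d < a ∧ a < b ∧ b < c)

/-- `τ` covers `τ'` in the uncrossing order. -/
def UncrossCover {m : ℕ} (τ' τ : Fin m → Fin m) : Prop :=
  IsMatching τ' ∧ IsMatching τ ∧
  ∃ a b c d : Fin m, CyclicOrder4 a b c d ∧ τ a = c ∧ τ b = d ∧
    (∀ x, x ≠ a → x ≠ b → x ≠ c → x ≠ d → τ' x = τ x) ∧
    ((τ' a = d ∧ τ' b = c ∧ ∀ x ∈ cIoo a b, τ x ∉ cIoo c d) ∨
     (τ' a = b ∧ τ' c = d ∧ ∀ x ∈ cIoo b c, τ x ∉ cIoo d a))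

/-- The uncrossing partial order on matchings: reflexive-transitive closure of covers. -/
def uncrossLE {m : ℕ} (τ' τ : Fin m → Fin m) : Prop :=
  Relation.ReflTransGen UncrossCover τ' τ

/-- An affine permutation of period `m`. -/
def IsAffinePerm (m : ℕ) (f : ℤ → ℤ) : Prop :=
  Function.Bijective f ∧ ∀ i : ℤ, f (i + m) = f i + m

/-- The length of an affine permutation of period `m`:
`#{(i,j) : 1 ≤ i ≤ m, i < j, f i > f j}`. -/
def affLen (m : ℕ) (f : ℤ → ℤ) : ℕ :=
  Set.ncard {p : ℤ × ℤ | 1 ≤ p.1 ∧ p.1 ≤ (m:ℤ) ∧ p.1 < p.2 ∧ f p.2 < f p.1}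

/-- The affine rank matrix `r_f(i,j) = #{a ≤ i : f a ≥ j}`. -/
def rankMat (f : ℤ → ℤ) (i j : ℤ) : ℕ :=
  Set.ncard {a : ℤ | a ≤ i ∧ j ≤ f a}

/-- Affine Bruhat order via rank matrices. -/
def bruhatLE (f g : ℤ → ℤ) : Prop := ∀ i j : ℤ, rankMat f i j ≤ rankMat g i j

/-- The sum `Σ_{i=1}^m (f i − i)`. -/
def windowSum (m : ℕ) (f : ℤ → ℤ) : ℤ :=
  ∑ i ∈ Finset.range m, (f ((i:ℤ)+1) - ((i:ℤ)+1))

/-- The affine permutation `g_τ` associated to a matching `τ` of `[2n]`: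
on `[2n]`, `g_τ i = τ i` if `τ i > i` and `g_τ i = τ i + 2n` if `τ i < i`,
extended periodically. -/
def gTau (n : ℕ) (τ : Fin (2*n) → Fin (2*n)) (i : ℤ) : ℤ :=
  if h : (i % ((2*n : ℕ) : ℤ)).toNat < 2*n then
    let r : Fin (2*n) := ⟨(i % ((2*n : ℕ) : ℤ)).toNat, h⟩
    (i - i % ((2*n : ℕ) : ℤ)) +
      (if r < τ r then ((τ r : ℕ) : ℤ) else ((τ r : ℕ) : ℤ) + 2*n)
  else i

/-- `f_τ = g_τ − 1`. -/
def fTau (n : ℕ) (τ : Fin (2*n) → Fin (2*n)) (i : ℤ) : ℤ := gTau n τ i - 1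

/-- An electrical affine permutation for `n`. -/
def IsElectrical (n : ℕ) (f : ℤ → ℤ) : Prop :=
  IsAffinePerm (2*n) f ∧
  (∀ i : ℤ, i ≤ f i ∧ f i ≤ i + 2*n - 2) ∧
  windowSum (2*n) f = ((n:ℤ) - 1) * (2*n) ∧
  ∀ i : ℤ, (f (f i + 1) - (i - 1)) % ((2*n : ℕ) : ℤ) = 0

/-- The Grassmann necklace subset `I_a(f) ⊆ [m]`: representatives in `[m]` (0-based) of
`{f b mod m : b < a and f b ≥ a}`. -/
def necklaceI (m : ℕ) (f : ℤ → ℤ) (a : ℤ) : Finset (Fin m) :=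
  univ.filter fun x => ∃ b : ℤ, b < a ∧ a ≤ f b ∧ f b % (m:ℤ) = ((x:ℕ):ℤ)

/-- The dual necklace subset `J_a(f) ⊆ [m]`: representatives in `[m]` (0-based) of
`{b mod m : b < a and f b ≥ a}`. -/
def necklaceJ (m : ℕ) (f : ℤ → ℤ) (a : ℤ) : Finset (Fin m) :=
  univ.filter fun x => ∃ b : ℤ, b < a ∧ a ≤ f b ∧ b % (m:ℤ) = ((x:ℕ):ℤ)

/-- Dominance order on `k`-element subsets of `Fin m`:
the `r`-th smallest element of `I` is at most the `r`-th smallest element of `J`. -/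
def domLE {m : ℕ} (k : ℕ) (I J : Finset (Fin m)) : Prop :=
  ∃ (hI : I.card = k) (hJ : J.card = k),
    ∀ r : Fin k, I.orderEmbOfFin hI r ≤ J.orderEmbOfFin hJ r

/-- `a`-shifted dominance order: rotate so that `a` becomes least, then compare. -/
def sdomLE {m : ℕ} (k : ℕ) (a : Fin m) (I J : Finset (Fin m)) : Prop :=
  domLE k (I.image (· - a)) (J.image (· - a))

/-- `a`-shifted lexicographic order on subsets of `Fin m`. -/
def lexLE {m : ℕ} (a : Fin m) (I J : Finset (Fin m)) : Prop :=
  I = J ∨ List.Lex (· < ·) ((I.image (· - a)).sort (· ≤ ·)) ((J.image (· - a)).sort (· ≤ ·))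

/-- A Catalan subset of `[2n]` (0-based): an `(n−1)`-subset such that the length-`2n`
word with `U` at positions `{0} ∪ {x+1 : x ∈ I}` and `D` elsewhere is a Dyck path. -/
def IsCatalan {n : ℕ} (I : Finset (Fin (2*n))) : Prop :=
  I.card = n - 1 ∧
  ∀ p : ℕ, p ≤ 2*n →
    p ≤ 2 * ((insert 0 (I.image fun x => (x:ℕ)+1)).filter (· < p)).card

/-- Catalan subset with respect to the shifted order `≤_a`. -/
def IsCatalanAt {n : ℕ} (a : Fin (2*n)) (I : Finset (Fin (2*n))) : Prop :=
  IsCatalan (I.image (· - a))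

/-- The set of maxima of `S` with respect to the `a`-shifted order. -/
def maxAt {m : ℕ} (a : Fin m) (S : Finset (Fin m)) : Finset (Fin m) :=
  S.filter fun x => ∀ y ∈ S, y - a ≤ x - a

/-- `I_a(σ)` for a noncrossing partition `σ`: the complement in `[2n]` of the set of
`≤_a`-maxima of the blocks of `σ` (embedded by `bar`) and of the blocks of the dual
partition `σ̃` (embedded by `til`). -/
def IaP {n : ℕ} (σ : NCP n) (a : Fin (2*n)) : Finset (Fin (2*n)) :=
  univ \ ((σ.parts.biUnion fun B => maxAt a (B.image bar)) ∪
          ((univ : Finset (Fin n)).biUnion fun i =>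
            maxAt a ((univ.filter (dualRel σ i)).image til)))

/-- `I` is concordant with `σ`: `I` has `n−1` elements and every block of `σ` and of
its dual `σ̃` contains exactly one element of `[2n] ∖ I`. -/
def Concordant {n : ℕ} (σ : NCP n) (I : Finset (Fin (2*n))) : Prop :=
  I.card = n - 1 ∧
  (∀ B ∈ σ.parts, ((B.image bar) ∩ (univ \ I)).card = 1) ∧
  (∀ i : Fin n, (((univ.filter (dualRel σ i)).image til) ∩ (univ \ I)).card = 1)

/-- `E(I)`: the set of noncrossing partitions concordant with `I`. -/
def ESet {n : ℕ} (I : Finset (Fin (2*n))) : Set (NCP n) :=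
  {σ | IsNoncrossing σ ∧ Concordant σ I}

/-- The maximal minor `Δ_I(X)` on the columns indexed by `I`, in increasing order. -/
def minorOn {k m : ℕ} (X : Matrix (Fin k) (Fin m) ℝ) (I : Finset (Fin m)) : ℝ :=
  if h : I.card = k then (X.submatrix id fun r => I.orderEmbOfFin h r).det else 0

/-- `X` is totally nonnegative: it has full rank `k` and all maximal minors are `≥ 0`. -/
def IsTNN {k m : ℕ} (X : Matrix (Fin k) (Fin m) ℝ) : Prop :=
  X.rank = k ∧ ∀ I : Finset (Fin m), I.card = k → 0 ≤ minorOn X I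

/-- `t` times the matrix unit `E_{p,q}` (0-based indices). -/
def matE (m : ℕ) (p q : ℕ) (t : ℝ) : Matrix (Fin m) (Fin m) ℝ :=
  Matrix.of fun r s => if (r:ℕ) = p ∧ (s:ℕ) = q then t else 0

/-- `x_i(t) = Id + t·E_{i,i+1}` (1-based index `i`). -/
def xB (m i : ℕ) (t : ℝ) : Matrix (Fin m) (Fin m) ℝ := 1 + matE m (i-1) i t

/-- `y_i(t) = Id + t·E_{i+1,i}` (1-based index `i`). -/
def yB (m i : ℕ) (t : ℝ) : Matrix (Fin m) (Fin m) ℝ := 1 + matE m i (i-1) t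

/-- `u_i(t) = x_i(t)·y_{i−1}(t)` (1-based index `i`). -/
def uB (m i : ℕ) (t : ℝ) : Matrix (Fin m) (Fin m) ℝ := xB m i t * yB m (i-1) t

/-- The columns of `X`, extended `n`-periodically to all integer indices (0-based). -/
def colP {k n : ℕ} (X : Matrix (Fin k) (Fin n) ℝ) (i : ℤ) : Fin k → ℝ :=
  fun r => if h : (i % (n:ℤ)).toNat < n then X r ⟨(i % (n:ℤ)).toNat, h⟩ else 0

/-- `f_X(i) = min { j ≥ i : v_i ∈ span(v_{i+1}, …, v_j) }` (0-based columns). -/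
def fX {k n : ℕ} (X : Matrix (Fin k) (Fin n) ℝ) (i : ℤ) : ℤ :=
  sInf {j : ℤ | i ≤ j ∧ colP X i ∈ Submodule.span ℝ (colP X '' Set.Ioc i j)}

/-- Fintype instance for finite partitions of a finite set. -/
instance {α : Type*} [DecidableEq α] [Fintype α] (s : Finset α) : Fintype (Finpartition s) :=
  Fintype.ofInjective Finpartition.parts fun _ _ h => Finpartition.ext h

/-- The sorted list of (the values of) a subset of `Fin m`. -/
def sortedL {m : ℕ} (I : Finset (Fin m)) : List ℕ :=
  (I.sort (· ≤ ·)).map Fin.val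

/-- The number of inversions of a list (= the number of adjacent transpositions
needed to sort it, when entries are distinct). -/
def invNum (l : List ℕ) : ℕ :=
  ((Finset.range l.length ×ˢ Finset.range l.length).filter fun pq =>
    pq.1 < pq.2 ∧ l.getD pq.2 0 < l.getD pq.1 0).card

/-- The subset of `Fin m` whose values lie in the list `l`. -/
def toFinF {m : ℕ} (l : List ℕ) : Finset (Fin m) :=
  univ.filter fun x => (x:ℕ) ∈ l

/-- The double sum `Σ_{σ ∈ E(l), κ ∈ E(l')} L σ · L κ`, where `E` of a list with a
repeated entry (or an out-of-range entry) is empty. -/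
def pairSum {n : ℕ} (L : NCP n → ℝ) (l l' : List ℕ) : ℝ :=
  if (l.Nodup ∧ ∀ x ∈ l, x < 2*n) ∧ (l'.Nodup ∧ ∀ x ∈ l', x < 2*n) then
    ∑ᶠ σ ∈ ESet (n := n) (toFinF l), ∑ᶠ κ ∈ ESet (n := n) (toFinF l'), L σ * L κ
  else 0

/-- The list obtained from `LI` by replacing its entries at the positions in `S`
(in increasing order of position) by the first `#S` entries of `LJ`. -/
def swapI (LI LJ : List ℕ) (S : Finset ℕ) : List ℕ :=
  (List.range LI.length).map fun p =>
    if p ∈ S then LJ.getD ((S.filter (· < p)).card) 0 else LI.getD p 0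

/-- The list obtained from `LJ` by replacing its first `#S` entries by the entries of
`LI` at the positions in `S`, in increasing order. -/
def swapJ (LI LJ : List ℕ) (S : Finset ℕ) : List ℕ :=
  (List.range LJ.length).map fun p =>
    if p < S.card then LI.getD ((S.sort (· ≤ ·)).getD p 0) 0 else LJ.getD p 0

/-- The residue class of an integer, as an element of `Fin m`. -/
def residue (m : ℕ) [NeZero m] (i : ℤ) : Fin m :=
  ⟨(i % (m : ℤ)).toNat, by
    have hm : (0 : ℤ) < m := by exact_mod_cast Nat.pos_of_ne_zero (NeZero.ne m)
    have := Int.emod_lt_of_pos i hm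
    have := Int.emod_nonneg i hm.ne'
    omega⟩

/-- Arc diagrams on the line that are lifts of matchings of `m` points on a circle. -/
def IsArcMap (m : ℕ) (g : ℤ → ℤ) : Prop :=
  (∀ i, i < g i) ∧ ∀ i, g (g i) = i + m

section Residue

variable {m : ℕ} [NeZero m]

theorem coe_residue (i : ℤ) : ((residue m i : ℕ) : ℤ) = i % m := by
  have hm : (m : ℤ) ≠ 0 := by exact_mod_cast NeZero.ne m
  simp [residue, Int.emod_nonneg i hm]

theorem residue_eq_iff {i j : ℤ} : residue m i = residue m j ↔ (m : ℤ) ∣ i - j := by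
  rw [Fin.ext_iff, ← Int.natCast_inj, coe_residue, coe_residue,
    Int.emod_eq_emod_iff_emod_sub_eq_zero, Int.dvd_iff_emod_eq_zero]

theorem residue_coe (x : Fin m) : residue m ((x : ℕ) : ℤ) = x := by
  rw [Fin.ext_iff, ← Int.natCast_inj, coe_residue]
  exact Int.emod_eq_of_lt (by positivity) (by exact_mod_cast x.isLt)

theorem residue_add_period (i : ℤ) : residue m (i + m) = residue m i := by
  rw [residue_eq_iff]; simp

/-- Integers less than one period to the right of `a` wrap around at most once. -/
theorem sub_residue_cases {a y : ℤ} (h₁ : a ≤ y) (h₂ : y < a + m) :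
    y - (residue m y : ℕ) = a - (residue m a : ℕ) ∨
      y - (residue m y : ℕ) = a - (residue m a : ℕ) + m := by
  have hm : (0 : ℤ) < m := by exact_mod_cast Nat.pos_of_ne_zero (NeZero.ne m)
  rw [coe_residue, coe_residue]
  have h₃ : a / m ≤ y / m := Int.ediv_le_ediv hm h₁
  have h₄ : y / m ≤ (a + m) / m := Int.ediv_le_ediv hm h₂.le
  rw [Int.add_ediv_of_dvd_right (dvd_refl _), Int.ediv_self hm.ne'] at h₄
  have h₅ := Int.mul_ediv_add_emod y m
  have h₆ := Int.mul_ediv_add_emod a m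
  obtain h | h : y / m = a / m ∨ y / m = a / m + 1 := by omega
  · rw [h] at h₅; left; linarith
  · rw [h] at h₅; right; linarith

theorem eq_of_residue_eq {i x y : ℤ} (hx : i < x) (hx' : x ≤ i + m) (hy : i < y)
    (hy' : y ≤ i + m) (h : residue m x = residue m y) : x = y := by
  rw [residue_eq_iff] at h
  have := Int.eq_zero_of_abs_lt_dvd h (by rw [abs_lt]; omega)
  omega

theorem cyclicOrder4_residue {a b c d : ℤ} (hab : a < b) (hbc : b < c) (hcd : c < d)
    (hda : d < a + m) :
    CyclicOrder4 (residue m a) (residue m b) (residue m c) (residue m d) := by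
  have hb := sub_residue_cases (m := m) hab.le (by omega)
  have hc := sub_residue_cases (m := m) (hab.trans hbc).le (by omega)
  have hd := sub_residue_cases (m := m) (hab.trans (hbc.trans hcd)).le (by omega)
  have := (residue m a).isLt
  have := (residue m b).isLt
  have := (residue m c).isLt
  have := (residue m d).isLt
  simp only [CyclicOrder4, Fin.lt_def]
  omega

theorem residue_shift (a : ℤ) (x : Fin m) :
    residue m (a - (residue m a : ℕ) + (x : ℕ)) = x := by
  conv_rhs => rw [← residue_coe x]
  rw [residue_eq_iff, coe_residue]
  simpa using Int.dvd_self_sub_emod (x := a) (m := (m : ℤ))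

/-- The lift of a point of the circle to the period starting at `a`. -/
theorem exists_lift (a : ℤ) (x : Fin m) : ∃ y : ℤ, residue m y = x ∧
    ((residue m a ≤ x ∧ y = a - (residue m a : ℕ) + (x : ℕ)) ∨
      (x < residue m a ∧ y = a - (residue m a : ℕ) + (x : ℕ) + m)) := by
  rcases le_or_gt (residue m a) x with h | h
  · exact ⟨_, residue_shift a x, Or.inl ⟨h, rfl⟩⟩
  · exact ⟨_, (residue_add_period _).trans (residue_shift a x), Or.inr ⟨h, rfl⟩⟩

theorem CyclicOrder4.exists_lift {a : ℤ} {B C D : Fin m}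
    (h : CyclicOrder4 (residue m a) B C D) :
    ∃ b c d : ℤ, a < b ∧ b < c ∧ c < d ∧ d < a + m ∧
      residue m b = B ∧ residue m c = C ∧ residue m d = D := by
  obtain ⟨b, hb, hb'⟩ := _root_.exists_lift a B
  obtain ⟨c, hc, hc'⟩ := _root_.exists_lift a C
  obtain ⟨d, hd, hd'⟩ := _root_.exists_lift a D
  have := (residue m a).isLt
  have := B.isLt
  have := C.isLt
  have := D.isLt
  simp only [CyclicOrder4, Fin.lt_def, Fin.le_def] at h hb' hc' hd'
  refine ⟨b, c, d, ?_, ?_, ?_, ?_, hb, hc, hd⟩ <;> omega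

theorem exists_lift_of_mem_cIoo {a b : ℤ} (hab : a < b) (hb : b < a + m) {x : Fin m}
    (hx : x ∈ cIoo (residue m a) (residue m b)) : ∃ y, a < y ∧ y < b ∧ residue m y = x := by
  obtain ⟨y, hy, hy'⟩ := exists_lift a x
  have hb' := sub_residue_cases (m := m) hab.le hb
  have := (residue m a).isLt
  have := (residue m b).isLt
  have := x.isLt
  simp only [cIoo, mem_filter, mem_univ, true_and, Fin.lt_def, Fin.le_def, Fin.ext_iff,
    ne_eq] at hx hy'
  refine ⟨y, ?_, ?_, hy⟩ <;> split_ifs at hx <;> omega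

end Residue

section ArcMap

variable {m : ℕ} {g : ℤ → ℤ}

theorem IsArcMap.lt_add (hg : IsArcMap m g) (i : ℤ) : g i < i + m := by
  rw [← hg.2]; exact hg.1 _

theorem IsArcMap.map_add (hg : IsArcMap m g) (i : ℤ) : g (i + m) = g i + m := by
  rw [← hg.2, hg.2]

theorem IsArcMap.map_sub (hg : IsArcMap m g) (i : ℤ) : g (i - m) = g i - m := by
  have := hg.map_add (i - m)
  rw [sub_add_cancel] at this
  omega

theorem IsArcMap.injective (hg : IsArcMap m g) : Function.Injective g := fun x y h => by
  have := congrArg g h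
  rw [hg.2, hg.2] at this
  omega

theorem IsArcMap.map_add_of_dvd (hg : IsArcMap m g) {i k : ℤ} (hk : (m : ℤ) ∣ k) :
    g (i + k) = g i + k := by
  obtain ⟨q, rfl⟩ := hk
  induction q with
  | zero => simp
  | succ q ih =>
    rw [show i + (m : ℤ) * (q + 1) = i + m * q + m by ring, hg.map_add, ih]; ring
  | pred q ih =>
    rw [show i + (m : ℤ) * (-q - 1) = i + m * (-q) - m by ring, hg.map_sub, ih]; ring

theorem rankMat_add_period (hg : IsArcMap m g) {k : ℤ} (hk : (m : ℤ) ∣ k) (i j : ℤ) :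
    rankMat g (i + k) (j + k) = rankMat g i j := by
  symm
  refine Set.BijOn.ncard_eq (f := fun x => x + k)
    ⟨fun x hx => ?_, fun x _ y _ hxy => by simpa using hxy, fun x hx => ⟨x - k, ?_, by simp⟩⟩
  · simp only [Set.mem_ofPred_eq] at hx ⊢
    rw [hg.map_add_of_dvd hk]
    omega
  · simp only [Set.mem_ofPred_eq] at hx ⊢
    rw [sub_eq_add_neg, hg.map_add_of_dvd (dvd_neg.2 hk)]
    omega

theorem IsArcMap.finite (hg : IsArcMap m g) (i j : ℤ) : {a : ℤ | a ≤ i ∧ j ≤ g a}.Finite :=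
  (Set.finite_Icc (j - m) i).subset fun a ha => by
    have := hg.lt_add a
    simp only [Set.mem_ofPred_eq, Set.mem_Icc] at ha ⊢
    omega

theorem IsArcMap.rankMat_step_left (hg : IsArcMap m g) (i j : ℤ) :
    rankMat g i j = rankMat g (i - 1) j + if j ≤ g i then 1 else 0 := by
  unfold rankMat
  split_ifs with h
  · rw [← Set.ncard_insert_of_notMem (a := i) (by simp) (hg.finite _ _)]
    congr 1
    ext a
    simp only [Set.mem_ofPred_eq, Set.mem_insert_iff]
    constructor
    · intro ha
      by_cases a = i <;> omega
    · rintro (rfl | ha) <;> omega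
  · rw [add_zero]
    congr 1
    ext a
    simp only [Set.mem_ofPred_eq]
    have : a = i → g a = g i := fun h => by rw [h]
    omega

theorem IsArcMap.rankMat_step_right (hg : IsArcMap m g) (i j : ℤ) :
    rankMat g i j = rankMat g i (j + 1) + if g j ≤ i + m then 1 else 0 := by
  have hj : g (g j - m) = j := by rw [hg.map_sub, hg.2]; ring
  have hinj : ∀ a, g a = j → a = g j - m := fun a ha => hg.injective (by rw [ha, hj])
  unfold rankMat
  split_ifs with h
  · rw [← Set.ncard_insert_of_notMem (a := g j - m) (by simp [hj]) (hg.finite _ _)]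
    congr 1
    ext a
    simp only [Set.mem_ofPred_eq, Set.mem_insert_iff]
    have := hinj a
    constructor
    · intro ha
      by_cases g a = j <;> omega
    · rintro (rfl | ha) <;> omega
  · rw [add_zero]
    congr 1
    ext a
    simp only [Set.mem_ofPred_eq]
    have := hinj a
    omega

theorem IsArcMap.rankMat_eq_zero (hg : IsArcMap m g) {i j : ℤ} (h : i + m ≤ j) :
    rankMat g i j = 0 := by
  have : {a : ℤ | a ≤ i ∧ j ≤ g a} = ∅ := by
    ext a
    have := hg.lt_add a
    simp only [Set.mem_ofPred_eq, Set.mem_empty_iff_false, iff_false]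
    omega
  rw [rankMat, this, Set.ncard_empty]

theorem IsArcMap.two_mul_rankMat_period (hg : IsArcMap m g) :
    2 * rankMat g (m - 1) m = m := by
  have h₁ : rankMat g (m - 1) m = #{a ∈ Ico (0 : ℤ) m | (m : ℤ) ≤ g a} := by
    rw [rankMat, ← Set.ncard_coe_finset]
    congr 1
    ext a
    have := hg.lt_add a
    simp only [Set.mem_ofPred_eq, coe_filter, mem_Ico]
    omega
  have h₂ : #{a ∈ Ico (0 : ℤ) m | ¬ (m : ℤ) ≤ g a} = #{a ∈ Ico (0 : ℤ) m | (m : ℤ) ≤ g a} := by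
    refine card_bij' (fun a _ => g a) (fun a _ => g a - m) ?_ ?_ ?_ ?_
    · intro a ha
      have := hg.1 a
      have := hg.2 a
      simp only [mem_filter, mem_Ico] at ha ⊢
      omega
    · intro a ha
      have := hg.lt_add a
      have h₃ := hg.map_sub (g a)
      rw [hg.2] at h₃
      simp only [mem_filter, mem_Ico] at ha ⊢
      omega
    · intro a _
      have := hg.2 a
      omega
    · intro a _
      simp only [hg.map_sub, hg.2]
      ring
  have h₃ := card_filter_add_card_filter_not (s := Ico (0 : ℤ) m) (fun a => (m : ℤ) ≤ g a)
  simp only [Int.card_Ico, sub_zero, Int.toNat_natCast] at h₃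
  omega

theorem IsArcMap.two_mul_rankMat_diag (hg : IsArcMap m g) (j : ℤ) :
    2 * rankMat g (j - 1) j = m := by
  have step : ∀ j, rankMat g (j + 1 - 1) (j + 1) = rankMat g (j - 1) j := fun j => by
    have h₁ := hg.rankMat_step_left j (j + 1)
    have h₂ := hg.rankMat_step_right (j - 1) j
    have := hg.1 j
    have := hg.lt_add j
    rw [if_pos (by omega)] at h₁ h₂
    rw [add_sub_cancel_right]
    omega
  induction j using Int.inductionOn' (b := m) with
  | zero => exact hg.two_mul_rankMat_period
  | succ k _ ih => rw [step, ih]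
  | pred k _ ih => rw [← ih, ← step (k - 1), sub_add_cancel]

theorem IsArcMap.rankMat_symm (hg : IsArcMap m g) (i j : ℤ) :
    (2 * rankMat g i j : ℤ) = 2 * rankMat g (j - 1) (i + m + 1) + m + 2 * (i - j + 1) := by
  have step : ∀ i : ℤ, (rankMat g i j : ℤ) - rankMat g (j - 1) (i + m + 1) =
      rankMat g (i - 1) j - rankMat g (j - 1) (i - 1 + m + 1) + 1 := fun i => by
    have h₁ := hg.rankMat_step_left i j
    have h₂ := hg.rankMat_step_right (j - 1) (i + m)
    rw [hg.map_add] at h₂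
    rw [show i - 1 + m + 1 = i + (m : ℤ) by ring]
    split_ifs at h₁ h₂ <;> omega
  induction i using Int.inductionOn' (b := j - 1) with
  | zero =>
    have h₁ := hg.two_mul_rankMat_diag j
    have h₂ := hg.rankMat_eq_zero (i := j - 1) (j := j - 1 + m + 1) (by omega)
    omega
  | succ k _ ih =>
    have := step (k + 1)
    rw [add_sub_cancel_right] at this
    omega
  | pred k _ ih =>
    have := step k
    omega

theorem eq_of_rankMat_eq {f : ℤ → ℤ} (hf : IsArcMap m f) (hg : IsArcMap m g)
    (h : ∀ i j, rankMat f i j = rankMat g i j) : f = g := by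
  funext i
  have h₁ := hf.rankMat_step_left i (f i)
  have h₂ := hg.rankMat_step_left i (f i)
  have h₃ := hf.rankMat_step_left i (g i)
  have h₄ := hg.rankMat_step_left i (g i)
  rw [h, h] at h₁ h₃
  split_ifs at h₁ h₂ h₃ h₄ <;> omega

theorem rankMat_lt_symm {f : ℤ → ℤ} (hf : IsArcMap m f) (hg : IsArcMap m g) {i j : ℤ} :
    rankMat f (j - 1) (i + m + 1) < rankMat g (j - 1) (i + m + 1) ↔
      rankMat f i j < rankMat g i j := by
  have h₁ := hf.rankMat_symm i j
  have h₂ := hg.rankMat_symm i j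
  omega

theorem bounds_of_rankMat_lt {f : ℤ → ℤ} (hf : IsArcMap m f) (hg : IsArcMap m g) {i j : ℤ}
    (h : rankMat f i j < rankMat g i j) : i + 2 < j ∧ j < i + m := by
  constructor
  · by_contra hc
    rw [← rankMat_lt_symm hf hg, hg.rankMat_eq_zero (by omega)] at h
    omega
  · by_contra hc
    rw [hg.rankMat_eq_zero (by omega)] at h
    omega

/-- If `f < h` in Bruhat order, then some crossing of `f` can be resolved staying below `h`. -/
theorem exists_crossing {f h : ℤ → ℤ} (hf : IsArcMap m f) (hh : IsArcMap m h)
    (hle : bruhatLE f h) (hne : f ≠ h) :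
    ∃ a b, a < b ∧ f a < f b ∧ (∀ x, a < x → x < b → ¬ (f a < f x ∧ f x < f b)) ∧
      ∀ i j, a ≤ i → i < b → f a < j → j ≤ f b → rankMat f i j < rankMat h i j := by
  have hex : ∃ k : ℕ, ∃ i : ℤ, rankMat f i (i + m - k) < rankMat h i (i + m - k) := by
    by_contra! hc
    refine hne (eq_of_rankMat_eq hf hh fun i j => (hle i j).antisymm ?_)
    rcases le_or_gt j (i + m) with h' | h'
    · have := hc (i + m - j).toNat i
      rwa [Int.toNat_of_nonneg (by omega), sub_sub_cancel] at this
    · rw [hh.rankMat_eq_zero (by omega)]; omega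
  obtain ⟨a, ha⟩ := Nat.find_spec hex
  have hmax : ∀ i j : ℤ, a + m - Nat.find hex - a < j - i → rankMat f i j = rankMat h i j := by
    intro i j hij
    by_contra hc
    have hlt := (hle i j).lt_of_ne hc
    have := bounds_of_rankMat_lt hf hh hlt
    refine Nat.find_min hex (m := (i + m - j).toNat) (by omega) ⟨i, ?_⟩
    rwa [Int.toNat_of_nonneg (by omega), sub_sub_cancel]
  generalize a + m - (Nat.find hex : ℤ) = J at ha hmax
  have e₁ := hmax (a - 1) J (by omega)
  have e₂ := hmax (a - 1) (J + 1) (by omega)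
  have e₃ := hmax a (J + 1) (by omega)
  have s₁ := hf.rankMat_step_left a J
  have s₂ := hh.rankMat_step_left a J
  have s₃ := hf.rankMat_step_left a (J + 1)
  have s₄ := hh.rankMat_step_left a (J + 1)
  have hfa : f a < J ∧ h a = J := by
    split_ifs at s₁ s₂ s₃ s₄ <;> omega
  clear s₁ s₂ s₃ s₄
  obtain ⟨hfa, hha⟩ := hfa
  have key : ∀ t : ℕ, (∀ x, a < x → x ≤ a + t → ¬ (f a < f x ∧ f x ≤ J)) →
      ∀ j, f a < j → j ≤ J → rankMat f (a + t) j < rankMat h (a + t) j := by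
    intro t ht j hj hjJ
    suffices hs : (rankMat f (a + t) j : ℤ) - rankMat f (a + t) (J + 1) + 1 ≤
        rankMat h (a + t) j - rankMat h (a + t) (J + 1) by
      have := hle (a + t) (J + 1)
      omega
    induction t with
    | zero =>
      have s₁ := hf.rankMat_step_left a j
      have s₂ := hh.rankMat_step_left a j
      have := hle (a - 1) j
      rw [if_neg (by omega)] at s₁
      rw [if_pos (by omega)] at s₂
      simp only [Nat.cast_zero, add_zero]
      omega
    | succ t ih =>
      have ih' := ih fun x hx hx' => ht x hx (by push_cast; omega)
      have h₁ := ht (a + (t + 1 : ℕ)) (by push_cast; omega) le_rfl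
      have s₁ := hf.rankMat_step_left (a + (t + 1 : ℕ)) j
      have s₂ := hh.rankMat_step_left (a + (t + 1 : ℕ)) j
      have s₃ := hf.rankMat_step_left (a + (t + 1 : ℕ)) (J + 1)
      have s₄ := hh.rankMat_step_left (a + (t + 1 : ℕ)) (J + 1)
      rw [show a + ((t + 1 : ℕ) : ℤ) - 1 = a + t by push_cast; ring] at s₁ s₂ s₃ s₄
      split_ifs at s₁ s₂ s₃ s₄ <;> omega
  have hexb : ∃ t : ℕ, f a < f (a + t) ∧ f (a + t) ≤ J := by
    by_contra! hc
    have := key (J - a).toNat (fun x hx _ hfx => by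
      have := hc (x - a).toNat
      rw [Int.toNat_of_nonneg (by omega), add_sub_cancel] at this
      omega) J hfa le_rfl
    have := bounds_of_rankMat_lt hf hh this
    have := hh.1 a
    omega
  have hb := Nat.find_spec hexb
  have hmin : ∀ x, a < x → x < a + Nat.find hexb → ¬ (f a < f x ∧ f x ≤ J) := by
    intro x hx hx' hfx
    refine Nat.find_min hexb (m := (x - a).toNat) (by omega) ?_
    rwa [Int.toNat_of_nonneg (by omega), add_sub_cancel]
  have hpos : Nat.find hexb ≠ 0 := fun h0 => by
    rw [h0] at hb
    simp at hb
  refine ⟨a, a + Nat.find hexb, by omega, hb.1, fun x hx hx' hfx => hmin x hx hx' (by omega), ?_⟩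
  intro i j hi hib hj hj'
  have := key (i - a).toNat (fun x hx hx' => hmin x hx (by omega)) j hj (by omega)
  rwa [Int.toNat_of_nonneg (by omega), add_sub_cancel] at this

end ArcMap

theorem rank_set_ncard_le {f s : ℤ → ℤ} {i j : ℤ} {B : Set ℤ} (hs : Function.Involutive s)
    (hfin : {a : ℤ | a ≤ i ∧ j ≤ f a}.Finite) (hB : B ⊆ {a : ℤ | a ≤ i ∧ j ≤ f (s a)})
    (hgood : ∀ x ∈ B, f x < j → s x ≤ i) : B.ncard ≤ rankMat f i j := by
  refine Set.ncard_le_ncard_of_injOn (fun x => if j ≤ f x then x else s x) ?_ ?_ hfin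
  · intro x hx
    have := hB hx
    simp only [Set.mem_ofPred_eq] at this ⊢
    split_ifs with h
    · exact ⟨this.1, h⟩
    · exact ⟨hgood x hx (by omega), this.2⟩
  · intro x hx y hy hxy
    have hx' := hB hx
    have hy' := hB hy
    simp only [Set.mem_ofPred_eq] at hx' hy' hxy
    split_ifs at hxy with h₁ h₂ h₂
    · exact hxy
    · rw [hxy, hs] at hx'
      exact absurd hx'.2 h₂
    · rw [← hxy, hs] at hy'
      exact absurd hy'.2 h₁
    · exact hs.injective hxy

/-- Exchanging increasing pairs of values moves a permutation up in Bruhat order. -/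
theorem bruhatLE_comp {f s : ℤ → ℤ} (hs : Function.Involutive s)
    (hfin : ∀ i j, {a : ℤ | a ≤ i ∧ j ≤ f (s a)}.Finite)
    (hlt : ∀ x, x < s x → f x < f (s x)) : bruhatLE f (f ∘ s) := fun i j => by
  refine rank_set_ncard_le (f := f ∘ s) hs (hfin i j) (fun a ha => ?_) fun x hx hxj => ?_
  · simpa [hs a] using ha
  · by_contra hc
    have := hlt x (hx.1.trans_lt (not_le.1 hc))
    have := hx.2
    simp only [Function.comp_apply] at hxj
    omega

theorem comp_bruhatLE {f h s : ℤ → ℤ} (hs : Function.Involutive s)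
    (hf : ∀ i j, {a : ℤ | a ≤ i ∧ j ≤ f a}.Finite)
    (hfs : ∀ i j, {a : ℤ | a ≤ i ∧ j ≤ f (s a)}.Finite) (hle : bruhatLE f h)
    (huniq : ∀ i x y, x ≤ i → i < s x → y ≤ i → i < s y → x = y)
    (hrect : ∀ i j x, x ≤ i → i < s x → f x < j → j ≤ f (s x) → rankMat f i j < rankMat h i j) :
    bruhatLE (f ∘ s) h := fun i j => by
  by_cases hbad : ∃ x, x ≤ i ∧ i < s x ∧ f x < j ∧ j ≤ f (s x)
  · obtain ⟨x, hx, hsx, hfx, hfsx⟩ := hbad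
    refine le_trans ?_ (hrect i j x hx hsx hfx hfsx)
    have hmem : x ∈ {a : ℤ | a ≤ i ∧ j ≤ (f ∘ s) a} := ⟨hx, hfsx⟩
    rw [rankMat, ← Set.ncard_sdiff_singleton_add_one hmem (hfs i j)]
    refine Nat.succ_le_succ (rank_set_ncard_le hs (hf i j) Set.sdiff_subset fun y hy _ => ?_)
    by_contra hc
    exact hy.2 (huniq i y x hy.1.1 (not_le.1 hc) hx hsx)
  · refine le_trans (rank_set_ncard_le hs (hf i j) subset_rfl fun y hy hyj => ?_) (hle i j)
    by_contra hc
    exact hbad ⟨y, hy.1, not_le.1 hc, hyj, hy.2⟩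

/-- The periodic involution exchanging `a` with `b` and `c` with `d`. -/
def periodicSwap (m : ℕ) [NeZero m] (a b c d x : ℤ) : ℤ :=
  if residue m x = residue m a then x + (b - a)
  else if residue m x = residue m b then x + (a - b)
  else if residue m x = residue m c then x + (d - c)
  else if residue m x = residue m d then x + (c - d)
  else x

/-- The arcs starting at `a < b` cross in a fundamental domain. -/
def IsArcCrossing (m : ℕ) (g : ℤ → ℤ) (a b : ℤ) : Prop :=
  a < b ∧ b < g a ∧ g a < g b ∧ g b < a + m

/-- The arc diagram obtained by resolving the crossing of the arcs at `a` and `b`, joining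
`a` with the end of the arc at `b`. -/
def uncrossing (m : ℕ) [NeZero m] (g : ℤ → ℤ) (a b : ℤ) : ℤ → ℤ :=
  g ∘ periodicSwap m a b (g a) (g b)

section Uncrossing

variable {m : ℕ} [NeZero m] {g : ℤ → ℤ} {a b c d : ℤ}

theorem residue_ne (hab : a < b) (hb : b < a + m) : residue m a ≠ residue m b := fun h => by
  have := eq_of_residue_eq (m := m) (i := a) hab hb.le (by omega) le_rfl
    (h.symm.trans (residue_add_period a).symm)
  omega

theorem residue_add_of_dvd {k : ℤ} (hk : (m : ℤ) ∣ k) (x : ℤ) :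
    residue m (x + k) = residue m x := by
  rw [residue_eq_iff]; simpa using hk

theorem periodicSwap_spec (hab : a < b) (hbc : b < c) (hcd : c < d) (hda : d < a + m) {k : ℤ}
    (hk : (m : ℤ) ∣ k) :
    periodicSwap m a b c d (a + k) = b + k ∧ periodicSwap m a b c d (b + k) = a + k ∧
      periodicSwap m a b c d (c + k) = d + k ∧ periodicSwap m a b c d (d + k) = c + k := by
  have h₁ := residue_ne (m := m) hab (by omega)
  have h₂ := residue_ne (m := m) (hab.trans hbc) (by omega)
  have h₃ := residue_ne (m := m) (hab.trans (hbc.trans hcd)) (by omega)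
  have h₄ := residue_ne (m := m) hbc (by omega)
  have h₅ := residue_ne (m := m) (hbc.trans hcd) (by omega)
  have h₆ := residue_ne (m := m) hcd (by omega)
  refine ⟨?_, ?_, ?_, ?_⟩ <;>
  simp only [periodicSwap, residue_add_of_dvd hk, h₁.symm, h₂.symm, h₃.symm, h₄.symm, h₅.symm,
    h₆.symm, if_true, if_false] <;> ring

theorem periodicSwap_of_ne {x : ℤ} (h₁ : residue m x ≠ residue m a)
    (h₂ : residue m x ≠ residue m b) (h₃ : residue m x ≠ residue m c)
    (h₄ : residue m x ≠ residue m d) : periodicSwap m a b c d x = x := by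
  simp [periodicSwap, h₁, h₂, h₃, h₄]

theorem exists_eq_add_of_residue_eq {x y : ℤ} (h : residue m x = residue m y) :
    ∃ k, (m : ℤ) ∣ k ∧ x = y + k :=
  ⟨x - y, residue_eq_iff.1 h, by ring⟩

theorem periodicSwap_cases (a b c d x : ℤ) :
    (∃ k, (m : ℤ) ∣ k ∧ (x = a + k ∨ x = b + k ∨ x = c + k ∨ x = d + k)) ∨
      (residue m x ≠ residue m a ∧ residue m x ≠ residue m b ∧ residue m x ≠ residue m c ∧
        residue m x ≠ residue m d) := by
  refine or_iff_not_imp_left.2 fun h => ⟨?_, ?_, ?_, ?_⟩ <;> intro he <;>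
  obtain ⟨k, hk, rfl⟩ := exists_eq_add_of_residue_eq he <;>
  exact h ⟨k, hk, by simp⟩

theorem periodicSwap_involutive (hab : a < b) (hbc : b < c) (hcd : c < d) (hda : d < a + m) :
    Function.Involutive (periodicSwap m a b c d) := fun x => by
  rcases periodicSwap_cases (m := m) a b c d x with ⟨k, hk, hx⟩ | ⟨h₁, h₂, h₃, h₄⟩
  · obtain ⟨s₁, s₂, s₃, s₄⟩ := periodicSwap_spec hab hbc hcd hda hk
    rcases hx with rfl | rfl | rfl | rfl
    · rw [s₁, s₂]
    · rw [s₂, s₁]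
    · rw [s₃, s₄]
    · rw [s₄, s₃]
  · rw [periodicSwap_of_ne h₁ h₂ h₃ h₄, periodicSwap_of_ne h₁ h₂ h₃ h₄]

theorem IsArcMap.residue_congr (hg : IsArcMap m g) {x y : ℤ} (h : residue m x = residue m y) :
    residue m (g x) = residue m (g y) := by
  obtain ⟨k, hk, rfl⟩ := exists_eq_add_of_residue_eq h
  rw [hg.map_add_of_dvd hk, residue_add_of_dvd hk]

theorem IsArcMap.ext_residue {f : ℤ → ℤ} (hf : IsArcMap m f) (hg : IsArcMap m g)
    (h : ∀ i, residue m (f i) = residue m (g i)) : f = g :=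
  funext fun i => eq_of_residue_eq (hf.1 i) (hf.lt_add i).le (hg.1 i) (hg.lt_add i).le (h i)

theorem IsArcMap.residue_map_map (hg : IsArcMap m g) (x : ℤ) :
    residue m (g (g x)) = residue m x := by
  rw [hg.2, residue_add_period]

theorem IsArcCrossing.uncrossing_spec (hg : IsArcMap m g) (h : IsArcCrossing m g a b) {k : ℤ}
    (hk : (m : ℤ) ∣ k) :
    uncrossing m g a b (a + k) = g b + k ∧ uncrossing m g a b (b + k) = g a + k ∧
      uncrossing m g a b (g a + k) = b + m + k ∧ uncrossing m g a b (g b + k) = a + m + k := by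
  obtain ⟨s₁, s₂, s₃, s₄⟩ := periodicSwap_spec h.1 h.2.1 h.2.2.1 h.2.2.2 hk
  simp only [uncrossing, Function.comp_apply, s₁, s₂, s₃, s₄, hg.map_add_of_dvd hk, hg.2, and_self]

theorem uncrossing_of_ne {x : ℤ} (h₁ : residue m x ≠ residue m a)
    (h₂ : residue m x ≠ residue m b) (h₃ : residue m x ≠ residue m (g a))
    (h₄ : residue m x ≠ residue m (g b)) : uncrossing m g a b x = g x := by
  rw [uncrossing, Function.comp_apply, periodicSwap_of_ne h₁ h₂ h₃ h₄]

theorem IsArcCrossing.isArcMap_uncrossing (hg : IsArcMap m g) (h : IsArcCrossing m g a b) :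
    IsArcMap m (uncrossing m g a b) := by
  have main : ∀ x, x < uncrossing m g a b x ∧
      uncrossing m g a b (uncrossing m g a b x) = x + m := fun x => by
    have ⟨h₁, h₂, h₃, h₄⟩ := h
    rcases periodicSwap_cases (m := m) a b (g a) (g b) x with ⟨k, hk, hx⟩ | ⟨e₁, e₂, e₃, e₄⟩
    · obtain ⟨s₁, s₂, s₃, s₄⟩ := h.uncrossing_spec hg hk
      obtain ⟨t₁, t₂, t₃, t₄⟩ := h.uncrossing_spec hg (dvd_add (dvd_refl (m : ℤ)) hk)
      rcases hx with rfl | rfl | rfl | rfl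
      · rw [s₁, s₄]; omega
      · rw [s₂, s₃]; omega
      · rw [s₃, add_assoc, t₂]; omega
      · rw [s₄, add_assoc, t₁]; omega
    · rw [uncrossing_of_ne e₁ e₂ e₃ e₄, uncrossing_of_ne, hg.2]
      · exact ⟨hg.1 x, rfl⟩
      all_goals
        intro he
        have he := hg.residue_congr he
        simp only [hg.residue_map_map] at he
        contradiction
  exact ⟨fun i => (main i).1, fun i => (main i).2⟩

theorem IsArcCrossing.le_uncrossing (hg : IsArcMap m g) (h : IsArcCrossing m g a b) :
    bruhatLE g (uncrossing m g a b) := by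
  refine bruhatLE_comp (periodicSwap_involutive h.1 h.2.1 h.2.2.1 h.2.2.2)
    (h.isArcMap_uncrossing hg).finite fun x hx => ?_
  have ⟨h₁, h₂, h₃, h₄⟩ := h
  rcases periodicSwap_cases (m := m) a b (g a) (g b) x with ⟨k, hk, hx'⟩ | ⟨e₁, e₂, e₃, e₄⟩
  · obtain ⟨s₁, s₂, s₃, s₄⟩ := periodicSwap_spec h.1 h.2.1 h.2.2.1 h.2.2.2 hk
    rcases hx' with rfl | rfl | rfl | rfl
    · rw [s₁, hg.map_add_of_dvd hk, hg.map_add_of_dvd hk]; omega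
    · omega
    · rw [s₃, hg.map_add_of_dvd hk, hg.map_add_of_dvd hk, hg.2, hg.2]; omega
    · omega
  · rw [periodicSwap_of_ne e₁ e₂ e₃ e₄] at hx
    exact absurd hx (lt_irrefl _)

theorem periodicSwap_gt {x : ℤ} (hab : a < b) (hbc : b < c) (hcd : c < d) (hda : d < a + m)
    (hx : x < periodicSwap m a b c d x) : ∃ k, (m : ℤ) ∣ k ∧
      ((x = a + k ∧ periodicSwap m a b c d x = b + k) ∨
        (x = c + k ∧ periodicSwap m a b c d x = d + k)) := by
  rcases periodicSwap_cases (m := m) a b c d x with ⟨k, hk, hx'⟩ | ⟨e₁, e₂, e₃, e₄⟩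
  · refine ⟨k, hk, ?_⟩
    obtain ⟨s₁, s₂, s₃, s₄⟩ := periodicSwap_spec hab hbc hcd hda hk
    rcases hx' with rfl | rfl | rfl | rfl <;> omega
  · rw [periodicSwap_of_ne e₁ e₂ e₃ e₄] at hx
    exact absurd hx (lt_irrefl _)

theorem IsArcCrossing.uncrossing_le {h : ℤ → ℤ} (hg : IsArcMap m g) (hh : IsArcMap m h)
    (hc : IsArcCrossing m g a b) (hle : bruhatLE g h)
    (hrect : ∀ i j, a ≤ i → i < b → g a < j → j ≤ g b → rankMat g i j < rankMat h i j) :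
    bruhatLE (uncrossing m g a b) h := by
  have ⟨h₁, h₂, h₃, h₄⟩ := hc
  refine comp_bruhatLE (periodicSwap_involutive h₁ h₂ h₃ h₄) hg.finite
    (hc.isArcMap_uncrossing hg).finite hle ?_ ?_
  · intro i x y hx hx' hy hy'
    obtain ⟨k, hk, hxk⟩ := periodicSwap_gt h₁ h₂ h₃ h₄ (hx.trans_lt hx')
    obtain ⟨l, hl, hyl⟩ := periodicSwap_gt h₁ h₂ h₃ h₄ (hy.trans_lt hy')
    have : k = l := by
      have := Int.eq_zero_of_abs_lt_dvd (dvd_sub hk hl) (by rw [abs_lt]; omega)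
      omega
    omega
  · intro i j x hx hx' hj hj'
    obtain ⟨k, hk, ⟨hxk, hsk⟩ | ⟨hxk, hsk⟩⟩ := periodicSwap_gt h₁ h₂ h₃ h₄ (hx.trans_lt hx')
    · rw [hsk, hg.map_add_of_dvd hk] at hj'
      rw [hxk, hg.map_add_of_dvd hk] at hj
      have := hrect (i - k) (j - k) (by omega) (by omega) (by omega) (by omega)
      rwa [← rankMat_add_period hg hk, ← rankMat_add_period hh hk, sub_add_cancel,
        sub_add_cancel] at this
    · rw [hsk, hg.map_add_of_dvd hk, hg.2] at hj'
      rw [hxk, hg.map_add_of_dvd hk, hg.2] at hj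
      have := hrect (j - k - m - 1) (i - k + 1) (by omega) (by omega) (by omega) (by omega)
      rw [← rankMat_lt_symm hg hh, add_sub_cancel_right,
        show j - k - m - 1 + m + 1 = j - k by ring] at this
      rwa [← rankMat_add_period hg hk, ← rankMat_add_period hh hk, sub_add_cancel,
        sub_add_cancel] at this

/-- The lift of the condition defining covers in the uncrossing order. -/
theorem exists_uncrossing {f h : ℤ → ℤ} (hf : IsArcMap m f) (hh : IsArcMap m h)
    (hle : bruhatLE f h) (hne : f ≠ h) :
    ∃ a b, IsArcCrossing m f a b ∧ (∀ x, a < x → x < b → ¬ (f a < f x ∧ f x < f b)) ∧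
      bruhatLE (uncrossing m f a b) h := by
  obtain ⟨a, b, hab, hfab, hmin, hrect⟩ := exists_crossing hf hh hle hne
  have h₁ := bounds_of_rankMat_lt hf hh
    (hrect (b - 1) (f a + 1) (by omega) (by omega) (by omega) (by omega))
  have h₂ := bounds_of_rankMat_lt hf hh (hrect a (f b) le_rfl hab hfab le_rfl)
  have hc : IsArcCrossing m f a b := ⟨hab, by omega, hfab, by omega⟩
  exact ⟨a, b, hc, hmin, hc.uncrossing_le hf hh hle hrect⟩

end Uncrossing

theorem cyclicOrder4_exhaust {m : ℕ} {x y u v : Fin m} (hxy : x ≠ y) (hxu : x ≠ u) (hxv : x ≠ v)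
    (hyu : y ≠ u) (hyv : y ≠ v) (huv : u ≠ v) :
    1 = (if CyclicOrder4 x y u v then 1 else 0) + (if CyclicOrder4 x v u y then 1 else 0) +
      (if CyclicOrder4 x y v u then 1 else 0) + (if CyclicOrder4 x v y u then 1 else 0) +
      (if CyclicOrder4 u y v x then 1 else 0) + (if CyclicOrder4 u v y x then 1 else 0) := by
  unfold CyclicOrder4
  rcases hxy.lt_or_gt with h₁ | h₁ <;> rcases hxu.lt_or_gt with h₂ | h₂ <;>
  rcases hxv.lt_or_gt with h₃ | h₃ <;> rcases hyu.lt_or_gt with h₄ | h₄ <;>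
  rcases hyv.lt_or_gt with h₅ | h₅ <;> rcases huv.lt_or_gt with h₆ | h₆ <;>
  first
  | (exfalso; omega)
  | simp only [h₁, h₂, h₃, h₄, h₅, h₆, h₁.not_gt, h₂.not_gt, h₃.not_gt, h₄.not_gt, h₅.not_gt,
      h₆.not_gt, and_true, and_false, or_true, or_false,
      if_true, if_false, add_zero, zero_add]

theorem cyclicOrder4_eq_sum {m : ℕ} {x y u v : Fin m} :
    (if CyclicOrder4 x y u v then 1 else 0) =
      (if x < y ∧ y < u ∧ u < v then 1 else 0) + (if y < u ∧ u < v ∧ v < x then 1 else 0) +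
      (if u < v ∧ v < x ∧ x < y then 1 else 0) + (if v < x ∧ x < y ∧ y < u then 1 else 0) := by
  unfold CyclicOrder4
  split_ifs <;> omega

theorem sum_sum_comp_involutive {m : ℕ} {τ : Fin m → Fin m} (hτ : Function.Involutive τ)
    (F : Fin m → Fin m → ℕ) :
    ∑ x, ∑ y, F x (τ y) = ∑ x, ∑ y, F x y ∧ ∑ x, ∑ y, F (τ x) y = ∑ x, ∑ y, F x y :=
  ⟨sum_congr rfl fun x _ => Equiv.sum_comp hτ.toPerm (F x),
    Equiv.sum_comp hτ.toPerm fun x => ∑ y, F x y⟩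

theorem not_cyclicOrder4 {m : ℕ} {a b c d : Fin m}
    (h : a = b ∨ a = c ∨ a = d ∨ b = c ∨ b = d ∨ c = d) : ¬ CyclicOrder4 a b c d := by
  unfold CyclicOrder4
  omega

theorem card_nestings_add_crossNum {m : ℕ} {τ : Fin m → Fin m} (hτ : IsMatching τ) :
    4 * #{p : Fin m × Fin m | CyclicOrder4 p.1 p.2 (τ p.2) (τ p.1)} + 8 * crossNum τ + 2 * m =
      m * m := by
  obtain ⟨hinv, hfix⟩ := hτ
  set N : Fin m → Fin m → ℕ := fun x y => if CyclicOrder4 x y (τ y) (τ x) then 1 else 0 with hN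
  set A : Fin m → Fin m → ℕ := fun x y => if CyclicOrder4 x y (τ x) (τ y) then 1 else 0 with hA
  set L : Fin m → Fin m → ℕ := fun x y => if x < y ∧ y < τ x ∧ τ x < τ y then 1 else 0 with hL
  have cN : #{p : Fin m × Fin m | CyclicOrder4 p.1 p.2 (τ p.2) (τ p.1)} = ∑ x, ∑ y, N x y := by
    rw [card_filter, ← univ_product_univ, sum_product]
  have cL : crossNum τ = ∑ x, ∑ y, L x y := by
    rw [crossNum, card_filter, ← univ_product_univ, sum_product]
  have hAL : ∑ x, ∑ y, A x y = 4 * ∑ x, ∑ y, L x y := by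
    have : ∀ x y, A x y = L x y + L y (τ x) + L (τ x) (τ y) + L (τ y) x := fun x y => by
      simp only [hA, hL, hinv x, hinv y]
      exact cyclicOrder4_eq_sum
    simp only [this, sum_add_distrib]
    rw [(sum_sum_comp_involutive hinv fun x y => L y x).1,
      (sum_sum_comp_involutive hinv fun x y => L y x).2,
      (sum_sum_comp_involutive hinv fun x y => L x (τ y)).2, (sum_sum_comp_involutive hinv L).1,
      sum_comm (f := fun x y => L y x)]
    ring
  have hpt : ∀ x y, 1 = (if y = x then 1 else 0) + (if y = τ x then 1 else 0) +
      (A x y + A x (τ y) + N x y + N x (τ y) + N (τ x) y + N (τ x) (τ y)) := fun x y => by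
    simp only [hA, hN, hinv x, hinv y]
    by_cases h₁ : y = x
    · subst h₁
      simp [not_cyclicOrder4, (hfix y).symm]
    by_cases h₂ : y = τ x
    · subst h₂
      simp [not_cyclicOrder4, hinv x, hfix x]
    rw [if_neg h₁, if_neg h₂, zero_add, zero_add]
    exact cyclicOrder4_exhaust (Ne.symm h₁) (hfix x).symm (fun h => h₂ (by rw [h, hinv])) h₂
      (hfix y).symm (fun h => h₁ (hinv.injective h.symm))
  have hsum : ∑ x : Fin m, ∑ y : Fin m, 1 = m * m := by simp
  rw [← hsum, cN, cL, sum_congr rfl fun x _ => sum_congr rfl fun y _ => hpt x y]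
  simp only [sum_add_distrib]
  rw [(sum_sum_comp_involutive hinv A).1, (sum_sum_comp_involutive hinv N).1,
    (sum_sum_comp_involutive hinv N).2,
    (sum_sum_comp_involutive hinv fun x y => N x (τ y)).2, (sum_sum_comp_involutive hinv N).1, hAL]
  simp
  omega

section Matching

variable {n : ℕ} [NeZero (2 * n)]

theorem gTau_eq (τ : Fin (2 * n) → Fin (2 * n)) (i : ℤ) :
    gTau n τ i = i - (residue (2 * n) i : ℕ) +
      (if residue (2 * n) i < τ (residue (2 * n) i) then ((τ (residue (2 * n) i) : ℕ) : ℤ)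
        else ((τ (residue (2 * n) i) : ℕ) : ℤ) + (2 * n : ℕ)) := by
  have h : (i % ((2 * n : ℕ) : ℤ)).toNat < 2 * n := (residue (2 * n) i).isLt
  rw [gTau, dif_pos h, coe_residue]
  rfl

theorem residue_gTau (τ : Fin (2 * n) → Fin (2 * n)) (i : ℤ) :
    residue (2 * n) (gTau n τ i) = τ (residue (2 * n) i) := by
  rw [gTau_eq]
  split_ifs
  · exact residue_shift _ _
  · rw [← add_assoc, residue_add_period, residue_shift]

theorem isArcMap_gTau {τ : Fin (2 * n) → Fin (2 * n)} (hτ : IsMatching τ) :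
    IsArcMap (2 * n) (gTau n τ) := by
  have h : ∀ i, i < gTau n τ i ∧ gTau n τ i < i + (2 * n : ℕ) := fun i => by
    have h₁ := gTau_eq τ i
    have h₂ := hτ.2 (residue (2 * n) i)
    have := (residue (2 * n) i).isLt
    have := (τ (residue (2 * n) i)).isLt
    rw [Ne, Fin.ext_iff] at h₂
    simp only [Fin.lt_def] at h₁
    split_ifs at h₁ <;> omega
  refine ⟨fun i => (h i).1, fun i => ?_⟩
  have h₁ := h i
  have h₂ := h (gTau n τ i)
  refine eq_of_residue_eq (m := 2 * n) (i := gTau n τ i) (by omega) (by omega) (by omega)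
    (by omega) ?_
  rw [residue_gTau, residue_gTau, hτ.1, residue_add_period]

theorem gTau_injective : Function.Injective (gTau n) := fun τ τ' h => by
  funext x
  rw [← residue_coe x, ← residue_gTau τ, ← residue_gTau τ', h]

/-- The matching of the circle covered by an arc diagram on the line. -/
def arcMatching (m : ℕ) [NeZero m] (g : ℤ → ℤ) (x : Fin m) : Fin m := residue m (g (x : ℕ))

theorem arcMatching_residue {m : ℕ} [NeZero m] {g : ℤ → ℤ} (hg : IsArcMap m g) (i : ℤ) :
    arcMatching m g (residue m i) = residue m (g i) :=
  hg.residue_congr (residue_coe _)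

theorem isMatching_arcMatching {m : ℕ} [NeZero m] {g : ℤ → ℤ} (hg : IsArcMap m g) :
    IsMatching (arcMatching m g) := by
  refine ⟨fun x => ?_, fun x => ?_⟩
  · rw [← residue_coe x, arcMatching_residue hg, arcMatching_residue hg, hg.residue_map_map]
  · rw [← residue_coe x, arcMatching_residue hg]
    exact (residue_ne (hg.1 _) (hg.lt_add _)).symm

theorem gTau_arcMatching {g : ℤ → ℤ} (hg : IsArcMap (2 * n) g) :
    gTau n (arcMatching (2 * n) g) = g :=
  (isArcMap_gTau (isMatching_arcMatching hg)).ext_residue hg fun i => by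
    rw [residue_gTau, arcMatching_residue hg]

theorem uncrossCover_arcMatching {τ : Fin (2 * n) → Fin (2 * n)} (hτ : IsMatching τ) {a b : ℤ}
    (hc : IsArcCrossing (2 * n) (gTau n τ) a b)
    (hmin : ∀ x, a < x → x < b → ¬ (gTau n τ a < gTau n τ x ∧ gTau n τ x < gTau n τ b)) :
    UncrossCover (arcMatching (2 * n) (uncrossing (2 * n) (gTau n τ) a b)) τ := by
  have hg := isArcMap_gTau hτ
  have hu := hc.isArcMap_uncrossing hg
  have ⟨h₁, h₂, h₃, h₄⟩ := hc
  obtain ⟨s₁, s₂, -, -⟩ := hc.uncrossing_spec hg (dvd_zero _)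
  simp only [add_zero] at s₁ s₂
  refine ⟨isMatching_arcMatching hu, hτ, residue (2 * n) a, residue (2 * n) b,
    residue (2 * n) (gTau n τ a), residue (2 * n) (gTau n τ b),
    cyclicOrder4_residue h₁ h₂ h₃ h₄, (residue_gTau τ a).symm, (residue_gTau τ b).symm,
    fun x hxa hxb hxc hxd => ?_, Or.inl ⟨?_, ?_, fun x hx hx' => ?_⟩⟩
  · rw [← residue_coe x] at hxa hxb hxc hxd
    rw [← residue_coe x, arcMatching_residue hu, uncrossing_of_ne hxa hxb hxc hxd, residue_gTau]
  · rw [arcMatching_residue hu, s₁]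
  · rw [arcMatching_residue hu, s₂]
  · obtain ⟨y, hy, hy', rfl⟩ := exists_lift_of_mem_cIoo h₁ (by omega) hx
    obtain ⟨z, hz, hz', hzy⟩ := exists_lift_of_mem_cIoo h₃ (by omega) hx'
    have : gTau n τ y = z := eq_of_residue_eq (m := 2 * n) (hg.1 y) (hg.lt_add y).le (by omega)
      (by omega) (by rw [residue_gTau, hzy])
    exact hmin y hy hy' (by omega)

theorem bruhatLE_of_uncross {τ τ' : Fin (2 * n) → Fin (2 * n)} (hτ : IsMatching τ)
    (hτ' : IsMatching τ') {a b c d : Fin (2 * n)} (ho : CyclicOrder4 a b c d) (hac : τ a = c)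
    (hbd : τ b = d) (hne : ∀ x, x ≠ a → x ≠ b → x ≠ c → x ≠ d → τ' x = τ x) (had : τ' a = d)
    (hbc : τ' b = c) : bruhatLE (gTau n τ) (gTau n τ') := by
  have hg := isArcMap_gTau hτ
  obtain ⟨a, rfl⟩ : ∃ i : ℤ, residue (2 * n) i = a := ⟨_, residue_coe a⟩
  obtain ⟨b, c, d, h₁, h₂, h₃, h₄, rfl, rfl, rfl⟩ := ho.exists_lift
  obtain rfl : gTau n τ a = c := eq_of_residue_eq (m := 2 * n) (hg.1 a) (hg.lt_add a).le (by omega)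
    (by omega) (by rw [residue_gTau, hac])
  obtain rfl : gTau n τ b = d := eq_of_residue_eq (m := 2 * n) (hg.1 b) (hg.lt_add b).le (by omega)
    (by omega) (by rw [residue_gTau, hbd])
  have hc : IsArcCrossing (2 * n) (gTau n τ) a b := ⟨h₁, h₂, h₃, h₄⟩
  suffices h : gTau n τ' = uncrossing (2 * n) (gTau n τ) a b by
    rw [h]; exact hc.le_uncrossing hg
  refine (isArcMap_gTau hτ').ext_residue (hc.isArcMap_uncrossing hg) fun i => ?_
  rw [residue_gTau]
  rcases periodicSwap_cases (m := 2 * n) a b (gTau n τ a) (gTau n τ b) i with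
    ⟨k, hk, hi⟩ | ⟨e₁, e₂, e₃, e₄⟩
  · obtain ⟨s₁, s₂, s₃, s₄⟩ := hc.uncrossing_spec hg hk
    rcases hi with rfl | rfl | rfl | rfl
    · rw [s₁, residue_add_of_dvd hk, residue_add_of_dvd hk, had]
    · rw [s₂, residue_add_of_dvd hk, residue_add_of_dvd hk, hbc]
    · rw [s₃, residue_add_of_dvd hk, residue_add_of_dvd hk, residue_add_period, ← hbc, hτ'.1]
    · rw [s₄, residue_add_of_dvd hk, residue_add_of_dvd hk, residue_add_period, ← had, hτ'.1]
  · rw [hne _ e₁ e₂ e₃ e₄, uncrossing_of_ne e₁ e₂ e₃ e₄, residue_gTau]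

theorem bruhatLE_of_uncrossCover {τ τ' : Fin (2 * n) → Fin (2 * n)} (h : UncrossCover τ' τ) :
    bruhatLE (gTau n τ) (gTau n τ') := by
  obtain ⟨hτ', hτ, a, b, c, d, ho, hac, hbd, hne, ⟨had, hbc, -⟩ | ⟨hab, hcd, -⟩⟩ := h
  · exact bruhatLE_of_uncross hτ hτ' ho hac hbd hne had hbc
  · refine bruhatLE_of_uncross hτ hτ' (a := b) (b := c) (c := d) (d := a) ?_ hbd
      (by rw [← hac, hτ.1]) (fun x hb hc hd ha => hne x ha hb hc hd) (by rw [← hab, hτ'.1]) hcd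
    unfold CyclicOrder4 at ho ⊢
    tauto

theorem bruhatLE_of_uncrossLE {τ τ' : Fin (2 * n) → Fin (2 * n)} (h : uncrossLE τ' τ) :
    bruhatLE (gTau n τ) (gTau n τ') := by
  induction h with
  | refl => exact fun i j => le_rfl
  | tail _ h ih => exact fun i j => (bruhatLE_of_uncrossCover h i j).trans (ih i j)

theorem uncrossLE_of_bruhatLE {τ τ' : Fin (2 * n) → Fin (2 * n)} (hτ : IsMatching τ)
    (hτ' : IsMatching τ') (h : bruhatLE (gTau n τ) (gTau n τ')) : uncrossLE τ' τ := by
  induction hk : #{σ : Fin (2 * n) → Fin (2 * n) | bruhatLE (gTau n τ) (gTau n σ)}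
    using Nat.strong_induction_on generalizing τ with
  | _ k ih =>
    subst hk
    by_cases hne : gTau n τ = gTau n τ'
    · rw [gTau_injective hne]
      exact Relation.ReflTransGen.refl
    have hg := isArcMap_gTau hτ
    obtain ⟨a, b, hc, hmin, hle⟩ := exists_uncrossing hg (isArcMap_gTau hτ') h hne
    have hu := hc.isArcMap_uncrossing hg
    have hgu := gTau_arcMatching hu
    have hup := hc.le_uncrossing hg
    refine Relation.ReflTransGen.tail (ih _ ?_ (isMatching_arcMatching hu) (by rwa [hgu]) rfl)
      (uncrossCover_arcMatching hτ hc hmin)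
    refine card_lt_card ((ssubset_iff_of_subset fun σ hσ => ?_).2 ⟨τ, ?_, ?_⟩)
    · simp only [mem_filter, mem_univ, true_and, hgu] at hσ ⊢
      exact fun i j => (hup i j).trans (hσ i j)
    · simp only [mem_filter, mem_univ, true_and]
      exact fun i j => le_rfl
    · simp only [mem_filter, mem_univ, true_and, hgu]
      intro hdown
      have heq := eq_of_rankMat_eq hg hu fun i j => (hup i j).antisymm (hdown i j)
      have := (hc.uncrossing_spec hg (dvd_zero _)).1
      rw [← heq, add_zero, add_zero] at this
      exact hc.2.2.1.ne this

theorem affLen_gTau {τ : Fin (2 * n) → Fin (2 * n)} (hτ : IsMatching τ) :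
    affLen (2 * n) (gTau n τ) =
      #{p : Fin (2 * n) × Fin (2 * n) | CyclicOrder4 p.1 p.2 (τ p.2) (τ p.1)} := by
  have hg := isArcMap_gTau hτ
  rw [affLen, ← Set.ncard_coe_finset]
  refine Set.BijOn.ncard_eq (f := fun p => (residue (2 * n) p.1, residue (2 * n) p.2))
    ⟨?_, ?_, ?_⟩
  · rintro ⟨i, j⟩ ⟨-, -, hij, hgji⟩
    simp only [coe_filter, mem_univ, true_and, Set.mem_ofPred_eq, ← residue_gTau] at hij hgji ⊢
    exact cyclicOrder4_residue hij (hg.1 j) hgji (hg.lt_add i)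
  · rintro ⟨i, j⟩ ⟨hi, hi', hij, hgji⟩ ⟨k, l⟩ ⟨hk, hk', hkl, hglk⟩ he
    simp only [Prod.mk.injEq] at he hi hi' hij hgji hk hk' hkl hglk ⊢
    obtain rfl : i = k := eq_of_residue_eq (m := 2 * n) (i := 0) (by omega) (by omega) (by omega)
      (by omega) he.1
    have := hg.1 j
    have := hg.1 l
    have := hg.lt_add i
    exact ⟨rfl, eq_of_residue_eq (m := 2 * n) hij (by omega) hkl (by omega) he.2⟩
  · rintro ⟨x, y⟩ hxy
    simp only [coe_filter, mem_univ, true_and, Set.mem_ofPred_eq] at hxy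
    obtain ⟨i, hix, hi⟩ := exists_lift 1 x
    have hi' : 1 ≤ i ∧ i ≤ (2 * n : ℕ) := by
      have := x.isLt
      have := (residue (2 * n) 1).isLt
      simp only [Fin.le_def, Fin.lt_def] at hi
      omega
    subst hix
    obtain ⟨j, c, d, h₁, h₂, h₃, h₄, rfl, hc, hd⟩ := hxy.exists_lift
    obtain rfl : gTau n τ j = c := eq_of_residue_eq (m := 2 * n) (hg.1 j) (hg.lt_add j).le h₂
      (by omega) (by rw [residue_gTau, hc])
    obtain rfl : gTau n τ i = d := eq_of_residue_eq (m := 2 * n) (hg.1 i) (hg.lt_add i).le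
      (by omega) (by omega) (by rw [residue_gTau, hd])
    exact ⟨(i, j), ⟨hi'.1, hi'.2, h₁, h₃⟩, rfl⟩

theorem affLen_gTau_add_crossNum {τ : Fin (2 * n) → Fin (2 * n)} (hτ : IsMatching τ) :
    affLen (2 * n) (gTau n τ) + 2 * crossNum τ = 2 * (n * (n - 1) / 2) := by
  have h := card_nestings_add_crossNum hτ
  rw [← affLen_gTau hτ] at h
  rw [Nat.mul_div_cancel' (Nat.even_mul_pred_self n).two_dvd]
  obtain _ | k := n
  · exact absurd rfl (NeZero.ne (2 * 0))
  · rw [Nat.add_sub_cancel]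
    nlinarith

end Matching

theorem stmt5 (n : ℕ) (hn : 0 < n) :
    (∀ τ : Fin (2*n) → Fin (2*n), IsMatching τ →
      affLen (2*n) (gTau n τ) + 2 * crossNum τ = 2 * (n*(n-1)/2)) ∧
    (∀ τ τ' : Fin (2*n) → Fin (2*n), IsMatching τ → IsMatching τ' →
      (bruhatLE (gTau n τ) (gTau n τ') ↔ uncrossLE τ' τ)) := by
  have : NeZero (2 * n) := ⟨by omega⟩
  exact ⟨fun _ hτ => affLen_gTau_add_crossNum hτ,
    fun _ _ hτ hτ' => ⟨uncrossLE_of_bruhatLE hτ hτ', bruhatLE_of_uncrossLE⟩⟩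

end
end

section
/- Let X be a totally nonnegative real k×n matrix (k ≥ 2) with 2 < f_X(1) =: j and f_X(1) < f_X(2) < n+2, and suppose the ≤_2-lexicographically minimal k-subset of [n] with nonvanishing maximal minor has the form {2} ∪ I ∪ {j}, where I ⊆ {3,…,n}∖{j} has k−2 elements. Then Δ_{{1}∪I∪{j}}(X) ≠ 0, and for every J ⊆ {3,…,n} with |J| = k−1 and Δ_{{1}∪J}(X) ≠ 0 one has Δ_{{1}∪I∪{j}}(X)·Δ_{{2}∪J}(X) ≥ Δ_{{1}∪J}(X)·Δ_{{2}∪I∪{j}}(X). -/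
open Finset

noncomputable section
open scoped Classical

/-- The order embedding of `insert y S` inserts `y` into the order embedding of `S`. -/
theorem exists_orderEmbOfFin_insert {α : Type*} [LinearOrder α] {p : ℕ} {S : Finset α}
    (h : S.card = p) {y : α} (h' : (insert y S).card = p + 1) :
    ∃ q : Fin (p + 1), (q : ℕ) = (S.filter (· < y)).card ∧
      ((insert y S).orderEmbOfFin h' : Fin (p + 1) → α)
        = Fin.insertNth (α := fun _ => α) q y (S.orderEmbOfFin h) := by
  have hmem : y ∈ Set.range ((insert y S).orderEmbOfFin h') := by
    rw [Finset.range_orderEmbOfFin]; simp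
  obtain ⟨q, hq⟩ := hmem
  set E := (insert y S).orderEmbOfFin h' with hE
  refine ⟨q, ?_, ?_⟩
  · have hS : S.filter (· < y) = (Finset.Iio q).map E.toEmbedding := by
      ext z
      simp only [Finset.mem_filter, Finset.mem_map, Finset.mem_Iio]
      constructor
      · rintro ⟨hz, hzy⟩
        have : z ∈ Set.range E := by
          rw [hE, Finset.range_orderEmbOfFin]; simp [hz]
        obtain ⟨i, rfl⟩ := this
        refine ⟨i, ?_, rfl⟩
        rwa [← hq, E.lt_iff_lt] at hzy
      · rintro ⟨i, hi, rfl⟩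
        have hlt : E i < y := by rw [← hq, E.lt_iff_lt]; exact hi
        have := (insert y S).orderEmbOfFin_mem h' i
        rw [Finset.mem_insert] at this
        exact ⟨this.resolve_left hlt.ne, hlt⟩
    rw [hS, Finset.card_map, Fin.card_Iio]
  · have hu : (fun i => E (q.succAbove i)) = S.orderEmbOfFin h := by
      apply Finset.orderEmbOfFin_unique h
      · intro i
        have := (insert y S).orderEmbOfFin_mem h' (q.succAbove i)
        rw [Finset.mem_insert] at this
        refine this.resolve_left fun hc => ?_
        exact q.succAbove_ne i (E.injective (hc.trans hq.symm))
      · exact E.strictMono.comp (Fin.strictMono_succAbove q)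
    rw [← hu]
    refine (Fin.eq_insertNth_iff).2 ⟨hq, ?_⟩
    funext i
    rfl

theorem AlternatingMap.map_comp_insertNth_cons {V : Type*} [AddCommGroup V] [Module ℝ V] {m : ℕ}
    (D : V [⋀^Fin (m + 2)]→ₗ[ℝ] ℝ) (q : Fin (m + 1)) (x y : V) (u : Fin m → V) :
    D (Matrix.vecCons x (Fin.insertNth (α := fun _ => V) q y u))
      = (-1) ^ (q : ℕ) * D (Matrix.vecCons x (Matrix.vecCons y u)) := by
  have := (D.curryLeft x).map_insertNth q y u
  simpa using this

theorem minorOn_eq_detRowAlternating {k n : ℕ} (X : Matrix (Fin k) (Fin n) ℝ)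
    {S : Finset (Fin n)} (h : S.card = k) :
    minorOn X S = Matrix.detRowAlternating (fun r => X.col (S.orderEmbOfFin h r)) := by
  rw [minorOn, dif_pos h, ← Matrix.det_transpose]
  rfl

theorem comp_insertNth {α β : Type*} {p : ℕ} (v : α → β) (q : Fin (p + 1)) (y : α)
    (u : Fin p → α) :
    (fun r => v (Fin.insertNth (α := fun _ => α) q y u r))
      = Fin.insertNth (α := fun _ => β) q (v y) (fun r => v (u r)) := by
  refine (Fin.eq_insertNth_iff).2 ⟨by simp, ?_⟩
  funext i
  simp [Fin.removeNth]

theorem minorOn_insert_insert {m n : ℕ} (X : Matrix (Fin (m + 2)) (Fin n) ℝ)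
    {L : Finset (Fin n)} (hL : L.card = m) {x y : Fin n} (hxy : x < y) (hx : x ∉ L) (hy : y ∉ L) :
    minorOn X (insert x (insert y L))
      = (-1) ^ (L.filter (· < x)).card * (-1) ^ (L.filter (· < y)).card *
        Matrix.detRowAlternating (Matrix.vecCons (X.col x) (Matrix.vecCons (X.col y)
          (fun r => X.col (L.orderEmbOfFin hL r)))) := by
  have hx' : x ∉ insert y L := by simp [hx, hxy.ne]
  have hyc : (insert y L).card = m + 1 := by rw [Finset.card_insert_of_notMem hy, hL]
  have hxc : (insert x (insert y L)).card = m + 2 := by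
    rw [Finset.card_insert_of_notMem hx', hyc]
  obtain ⟨q, hq, hqe⟩ := exists_orderEmbOfFin_insert hL hyc
  obtain ⟨p, hp, hpe⟩ := exists_orderEmbOfFin_insert hyc hxc
  rw [minorOn_eq_detRowAlternating X hxc, hpe, comp_insertNth, hqe, comp_insertNth,
    AlternatingMap.map_insertNth, AlternatingMap.map_comp_insertNth_cons, hq, hp,
    Finset.filter_insert, if_neg hxy.not_gt, zsmul_eq_mul, mul_assoc]
  push_cast
  rfl

theorem detRowAlternating_vecCons_swap {m : ℕ} (u : Fin m → Fin (m + 2) → ℝ)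
    (W : (Fin (m + 2) → ℝ) → (Fin (m + 2) → ℝ) → ℝ)
    (hW : ∀ x y, W x y = Matrix.detRowAlternating (Matrix.vecCons x (Matrix.vecCons y u)))
    (x y : Fin (m + 2) → ℝ) : W x y = - W y x := by
  simp only [hW]
  rw [← AlternatingMap.map_swap _ _ (Fin.zero_ne_one (n := m))]
  congr 1
  funext i
  refine Fin.cases ?_ (fun i => Fin.cases ?_ (fun i => ?_) i) i
  · simp
  · simp
  · have h0 : (i.succ.succ : Fin (m + 2)) ≠ 0 := Fin.succ_ne_zero _
    have h1 : (i.succ.succ : Fin (m + 2)) ≠ 1 := by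
      rw [← Fin.succ_zero_eq_one]; exact fun h => Fin.succ_ne_zero _ (Fin.succ_injective _ h)
    simp [Equiv.swap_apply_of_ne_of_ne h0 h1]

theorem detRowAlternating_pluecker_of_ne_zero {m : ℕ} (u : Fin m → Fin (m + 2) → ℝ)
    (W : (Fin (m + 2) → ℝ) → (Fin (m + 2) → ℝ) → ℝ)
    (hW : ∀ x y, W x y = Matrix.detRowAlternating (Matrix.vecCons x (Matrix.vecCons y u)))
    (p q r s : Fin (m + 2) → ℝ) (hpq : W p q ≠ 0) :
    W p q * W r s - W p r * W q s + W p s * W q r = 0 := by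
  have add_left : ∀ x x' y, W (x + x') y = W x y + W x' y := by
    intro x x' y; simp only [hW]; exact AlternatingMap.map_vecCons_add _ _ _ _
  have smul_left : ∀ (c : ℝ) x y, W (c • x) y = c * W x y := by
    intro c x y; simp only [hW]; exact AlternatingMap.map_vecCons_smul _ _ _ _
  have anti := detRowAlternating_vecCons_swap u W hW
  have self : ∀ x, W x x = 0 := by intro x; linarith [anti x x]
  have zero_u : ∀ i y, W (u i) y = 0 := by
    intro i y
    rw [hW]
    exact AlternatingMap.map_eq_zero_of_eq _ _ (i := 0) (j := i.succ.succ) (by simp)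
      (Fin.succ_ne_zero _).symm
  have zero_sum : ∀ (c : Fin m → ℝ) y, W (∑ i, c i • u i) y = 0 := by
    intro c y
    have : ∀ T : Finset (Fin m), W (∑ i ∈ T, c i • u i) y = 0 := by
      intro T
      induction T using Finset.induction_on with
      | empty => simpa using smul_left 0 0 y
      | insert a T ha ih => rw [Finset.sum_insert ha, add_left, smul_left, zero_u, ih]; simp
    exact this _
  set M : Matrix (Fin (m + 2)) (Fin (m + 2)) ℝ := Matrix.vecCons p (Matrix.vecCons q u)
    with hM
  have hdet : IsUnit M.det := by
    rw [isUnit_iff_ne_zero]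
    have := hpq
    rw [hW] at this
    exact this
  have hr : r = Matrix.vecMul (Matrix.vecMul r M⁻¹) M := by
    rw [Matrix.vecMul_vecMul, Matrix.nonsing_inv_mul _ hdet, Matrix.vecMul_one]
  obtain ⟨c, hc⟩ : ∃ c : Fin (m + 2) → ℝ, r = Matrix.vecMul c M := ⟨_, hr⟩
  have hr' : r = c 0 • p + (c 1 • q + ∑ i : Fin m, c i.succ.succ • u i) := by
    rw [hc, Matrix.vecMul_eq_sum, Fin.sum_univ_succ, Fin.sum_univ_succ]
    simp [hM]
  have e1 : ∀ y, W r y = c 0 * W p y + c 1 * W q y := by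
    intro y
    rw [hr', add_left, add_left, smul_left, smul_left, zero_sum]; ring
  rw [e1 s, anti p r, e1 p, anti q r, e1 q, self, self, anti q p]
  ring

/-- The three-term Plücker relation. -/
theorem detRowAlternating_pluecker {m : ℕ} (u : Fin m → Fin (m + 2) → ℝ)
    (W : (Fin (m + 2) → ℝ) → (Fin (m + 2) → ℝ) → ℝ)
    (hW : ∀ x y, W x y = Matrix.detRowAlternating (Matrix.vecCons x (Matrix.vecCons y u)))
    (p q r s : Fin (m + 2) → ℝ) :
    W p q * W r s - W p r * W q s + W p s * W q r = 0 := by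
  by_cases h1 : W p q = 0
  · by_cases h2 : W p r = 0
    · by_cases h3 : W p s = 0
      · rw [h1, h2, h3]; ring
      · linear_combination detRowAlternating_pluecker_of_ne_zero u W hW p s q r h3 -
          W p r * detRowAlternating_vecCons_swap u W hW q s +
          W p q * detRowAlternating_vecCons_swap u W hW r s
    · linear_combination detRowAlternating_pluecker_of_ne_zero u W hW p r s q h2 -
        W p r * detRowAlternating_vecCons_swap u W hW q s +
        W p s * detRowAlternating_vecCons_swap u W hW q r
  · exact detRowAlternating_pluecker_of_ne_zero u W hW p q r s h1

/-- The three-term Plücker relation for minors. -/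
theorem minorOn_pluecker {m n : ℕ} (X : Matrix (Fin (m + 2)) (Fin n) ℝ)
    {L : Finset (Fin n)} (hL : L.card = m) {x y z w : Fin n} (hxy : x < y) (hyz : y < z)
    (hzw : z < w) (hx : x ∉ L) (hy : y ∉ L) (hz : z ∉ L) (hw : w ∉ L) :
    minorOn X (insert x (insert z L)) * minorOn X (insert y (insert w L)) =
      minorOn X (insert x (insert y L)) * minorOn X (insert z (insert w L)) +
      minorOn X (insert x (insert w L)) * minorOn X (insert y (insert z L)) := by
  have := detRowAlternating_pluecker (fun r => X.col (L.orderEmbOfFin hL r)) _ (fun _ _ => rfl)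
    (X.col x) (X.col y) (X.col z) (X.col w)
  rw [minorOn_insert_insert X hL hxy hx hy, minorOn_insert_insert X hL hzw hz hw,
    minorOn_insert_insert X hL (hxy.trans hyz) hx hz,
    minorOn_insert_insert X hL (hyz.trans hzw) hy hw,
    minorOn_insert_insert X hL (hxy.trans (hyz.trans hzw)) hx hw,
    minorOn_insert_insert X hL hyz hy hz]
  linear_combination (-((-1) ^ (L.filter (· < x)).card * (-1) ^ (L.filter (· < y)).card *
    (-1) ^ (L.filter (· < z)).card * (-1) ^ (L.filter (· < w)).card)) * this

theorem minorOn_ne_zero_iff {k n : ℕ} (X : Matrix (Fin k) (Fin n) ℝ)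
    {S : Finset (Fin n)} (h : S.card = k) :
    minorOn X S ≠ 0 ↔ LinearIndepOn ℝ X.col (S : Set (Fin n)) := by
  rw [minorOn, dif_pos h, ← isUnit_iff_ne_zero, ← Matrix.isUnit_iff_isUnit_det,
    ← Matrix.linearIndependent_cols_iff_isUnit]
  have : (X.submatrix id fun r => S.orderEmbOfFin h r).col
      = (fun x : S => X.col x) ∘ (S.orderIsoOfFin h) := by
    ext r c; rfl
  rw [this]
  exact linearIndependent_equiv (S.orderIsoOfFin h).toEquiv

section Exchange

variable {ι V : Type*} [AddCommGroup V] [Module ℝ V] {v : ι → V}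

theorem LinearIndepOn.exists_notMem_span_diff {B B' : Finset ι} {C : Set ι}
    (hB : LinearIndepOn ℝ v (B : Set ι)) (hBB : B' ⊆ B) {u : V}
    (hu : u ∈ Submodule.span ℝ (v '' (B' : Set ι)))
    (huC : u ∉ Submodule.span ℝ (v '' C)) :
    ∃ b ∈ B', b ∉ C ∧ u ∉ Submodule.span ℝ (v '' ((B : Set ι) \ {b})) := by
  rw [Submodule.mem_span_image_finset_iff_exists_fun'] at hu
  obtain ⟨c, rfl⟩ := hu
  obtain ⟨b, hb, hbC⟩ : ∃ b ∈ B', c b • v b ∉ Submodule.span ℝ (v '' C) := by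
    by_contra! hcon
    exact huC (Submodule.sum_mem _ hcon)
  have hcb : c b ≠ 0 := by
    rintro h0; rw [h0, zero_smul] at hbC; exact hbC (Submodule.zero_mem _)
  refine ⟨b, hb, fun h => hbC (Submodule.smul_mem _ _ (Submodule.subset_span ⟨b, h, rfl⟩)), ?_⟩
  intro hspan
  have hrest : ∑ x ∈ B'.erase b, c x • v x ∈ Submodule.span ℝ (v '' ((B : Set ι) \ {b})) := by
    refine Submodule.sum_mem _ fun x hx => Submodule.smul_mem _ _ (Submodule.subset_span ?_)
    rw [Finset.mem_erase] at hx
    exact ⟨x, ⟨hBB hx.2, hx.1⟩, rfl⟩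
  rw [← Finset.add_sum_erase _ _ hb] at hspan
  have h1 := (Submodule.add_mem_iff_left _ hrest).1 hspan
  exact hB.notMem_span (hBB hb) ((Submodule.smul_mem_iff _ hcb).1 h1)

theorem mem_span_image_insert_exchange {S : Set ι} {x y : ι}
    (h : v x ∈ Submodule.span ℝ (v '' insert y S)) (hx : v x ∉ Submodule.span ℝ (v '' S)) :
    v y ∈ Submodule.span ℝ (v '' insert x S) := by
  rw [Set.image_insert_eq] at h ⊢
  exact mem_span_insert_exchange h hx

end Exchange

theorem List.Lex.exists_mem_of_sortedLT {α : Type*} [LinearOrder α] {l₁ l₂ : List α}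
    (h : List.Lex (· < ·) l₁ l₂) (hlen : l₁.length = l₂.length)
    (h₁ : l₁.Pairwise (· < ·)) (h₂ : l₂.Pairwise (· < ·)) :
    ∃ x ∈ l₁, x ∉ l₂ ∧ ∀ y ∈ l₂, y < x → y ∈ l₁ := by
  induction h with
  | nil => simp at hlen
  | @cons a l₁ l₂ _ ih =>
    rw [List.pairwise_cons] at h₁ h₂
    obtain ⟨x, hx, hx', hy⟩ := ih (by simpa using hlen) h₁.2 h₂.2
    refine ⟨x, List.mem_cons_of_mem _ hx, ?_, ?_⟩
    · rw [List.mem_cons, not_or]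
      exact ⟨(h₁.1 x hx).ne', hx'⟩
    · intro y hyl hyx
      rcases List.mem_cons.1 hyl with rfl | hyl
      · simp
      · exact List.mem_cons_of_mem _ (hy y hyl hyx)
  | @rel a l₁ b l₂ hab =>
    rw [List.pairwise_cons] at h₂
    refine ⟨a, by simp, ?_, ?_⟩
    · rw [List.mem_cons, not_or]
      exact ⟨hab.ne, fun h => (h₂.1 a h).not_gt hab⟩
    · intro y hy hya
      rcases List.mem_cons.1 hy with rfl | hy
      · exact absurd hya hab.not_gt
      · exact absurd (hya.trans hab) (h₂.1 y hy).not_gt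

theorem lexLE.exists_mem {m : ℕ} {a : Fin m} {S T : Finset (Fin m)} (h : lexLE a S T)
    (hne : S ≠ T) (hcard : S.card = T.card) :
    ∃ x ∈ S, x ∉ T ∧ ∀ y ∈ T, y - a < x - a → y ∈ S := by
  have : NeZero m := ⟨by rintro rfl; exact a.elim0⟩
  have hinj : Function.Injective (fun x : Fin m => x - a) := sub_left_injective
  obtain ⟨x, hx, hxT, hy⟩ := (h.resolve_left hne).exists_mem_of_sortedLT
    (by simp [Finset.card_image_of_injective _ hinj, hcard])
    (Finset.sortedLT_sort _).pairwise (Finset.sortedLT_sort _).pairwise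
  simp only [Finset.mem_sort, Finset.mem_image] at hx hxT hy
  obtain ⟨x, hx, rfl⟩ := hx
  refine ⟨x, hx, fun h => hxT ⟨x, h, rfl⟩, fun y hyT hyx => ?_⟩
  obtain ⟨z, hz, hzy⟩ := hy _ ⟨y, hyT, rfl⟩ hyx
  rwa [← hinj hzy]

/-- The lexicographically minimal basis is obtained greedily. -/
theorem mem_span_of_lexLE {k n : ℕ} {X : Matrix (Fin k) (Fin n) ℝ} {one : Fin n}
    (hone : (one : ℕ) = 1) {G : Finset (Fin n)} (hcard : G.card = k)
    (hG : minorOn X G ≠ 0)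
    (hlex : ∀ K : Finset (Fin n), K.card = k → minorOn X K ≠ 0 → lexLE one G K)
    {c : Fin n} (hc : 1 ≤ (c : ℕ)) :
    X.col c ∈ Submodule.span ℝ (X.col '' {g | g ∈ G ∧ g ≤ c}) := by
  by_contra hcon
  have hGi := (minorOn_ne_zero_iff X hcard).1 hG
  have hcG : c ∉ G := fun h => hcon (Submodule.subset_span ⟨c, ⟨h, le_rfl⟩, rfl⟩)
  obtain ⟨g, hg, hgC, hgs⟩ := hGi.exists_notMem_span_diff subset_rfl
    (u := X.col c) (by
      have := (hGi.linearIndependent.span_eq_top_of_card_eq_finrank' (by simp [hcard]))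
      rw [← Set.image_eq_range] at this
      rw [this]; trivial) hcon
  have hcg : c < g := by
    by_contra hle
    exact hgC ⟨hg, not_lt.1 hle⟩
  have hcE : c ∉ G.erase g := fun h => hcG (Finset.mem_of_mem_erase h)
  have hKc : (insert c (G.erase g)).card = k := by
    rw [Finset.card_insert_of_notMem hcE, Finset.card_erase_add_one hg, hcard]
  have hK : minorOn X (insert c (G.erase g)) ≠ 0 := by
    rw [minorOn_ne_zero_iff X hKc, Finset.coe_insert, Finset.coe_erase]
    exact (hGi.mono Set.sdiff_subset).insert hgs
  obtain ⟨x, hx, hxK, hy⟩ := (hlex _ hKc hK).exists_mem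
    (fun h => hcG (h ▸ Finset.mem_insert_self _ _)) (hcard.trans hKc.symm)
  have hxg : x = g := by
    by_contra hne
    exact hxK (Finset.mem_insert_of_mem (Finset.mem_erase.2 ⟨hne, hx⟩))
  subst hxg
  refine hcG (hy c (Finset.mem_insert_self _ _) ?_)
  have hoc : one ≤ c := by rw [Fin.le_def]; omega
  rw [Fin.lt_def, Fin.sub_val_of_le hoc, Fin.sub_val_of_le (hoc.trans hcg.le)]
  have := Fin.lt_def.1 hcg
  omega

section Bridge

variable {m n : ℕ} {X : Matrix (Fin (m + 2)) (Fin n) ℝ} {zero one jf : Fin n}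
  {A : Finset (Fin n)}

theorem lt_of_notMem_span_greedy
    (hgreedy : ∀ c, one ≤ c →
      X.col c ∈ Submodule.span ℝ (X.col '' {g | g ∈ insert one A ∧ g ≤ c}))
    (hAlo : ∀ x ∈ A, one < x)
    (hone : ∀ c, X.col one ∈ Submodule.span ℝ (X.col '' Set.Ioc one c) → jf < c)
    {c : Fin n} (hc : one < c)
    (hcA : X.col c ∉ Submodule.span ℝ (X.col '' {g | g ∈ A ∧ g ≤ c})) :
    jf < c ∧ X.col one ∈ Submodule.span ℝ (X.col '' insert c {g | g ∈ A ∧ g ≤ c}) := by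
  have h : X.col one ∈ Submodule.span ℝ (X.col '' insert c {g | g ∈ A ∧ g ≤ c}) := by
    refine mem_span_image_insert_exchange
      (Submodule.span_mono (Set.image_mono ?_) (hgreedy c hc.le)) hcA
    rintro g ⟨hg, hgc⟩
    rcases Finset.mem_insert.1 hg with rfl | hg
    · exact Set.mem_insert _ _
    · exact Set.mem_insert_of_mem _ ⟨hg, hgc⟩
  refine ⟨hone c (Submodule.span_mono (Set.image_mono ?_) h), h⟩
  rintro g (rfl | ⟨hg, hgc⟩)
  · exact ⟨hc, le_rfl⟩
  · exact ⟨hAlo g hg, hgc⟩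

theorem col_zero_mem_span_greedy
    (hgreedy : ∀ c, one ≤ c →
      X.col c ∈ Submodule.span ℝ (X.col '' {g | g ∈ insert one A ∧ g ≤ c}))
    (hzero : X.col zero ∈ Submodule.span ℝ (X.col '' Set.Icc one jf)) :
    X.col zero ∈ Submodule.span ℝ (X.col '' {g | g ∈ insert one A ∧ g ≤ jf}) := by
  refine Submodule.span_le.2 ?_ hzero
  rintro _ ⟨c, hc, rfl⟩
  refine Submodule.span_mono (Set.image_mono ?_) (hgreedy c hc.1)
  exact fun g hg => ⟨hg.1, hg.2.trans hc.2⟩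

theorem minorOn_insert_zero_ne_zero (hnn : ∀ S : Finset (Fin n), S.card = m + 2 → 0 ≤ minorOn X S)
    (hz : zero < one) (hz' : ∀ x, x ≠ zero → one ≤ x)
    (hgreedy : ∀ c, one ≤ c →
      X.col c ∈ Submodule.span ℝ (X.col '' {g | g ∈ insert one A ∧ g ≤ c}))
    (hAlo : ∀ x ∈ A, one < x) (hA : A.card = m + 1) (hjf : jf ∈ A)
    (hG : minorOn X (insert one A) ≠ 0)
    (hzero : X.col zero ∈ Submodule.span ℝ (X.col '' Set.Icc one jf))
    (hzero' : X.col zero ∉ Submodule.span ℝ (X.col '' Set.Ico one jf))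
    (hone : ∀ c, X.col one ∈ Submodule.span ℝ (X.col '' Set.Ioc one c) → jf < c)
    (hone' : X.col one ∈ Submodule.span ℝ (X.col '' {x | x ≠ one})) :
    minorOn X (insert zero A) ≠ 0 := by
  have h1A : one ∉ A := fun h => lt_irrefl _ (hAlo _ h)
  have h0A : zero ∉ A := fun h => (hAlo _ h).not_gt hz
  have card_ins : ∀ {x}, x ∉ A → (insert x A).card = m + 2 := fun h => by
    rw [Finset.card_insert_of_notMem h, hA]
  have hGi := (minorOn_ne_zero_iff X (card_ins h1A)).1 hG
  have hAi : LinearIndepOn ℝ X.col (A : Set (Fin n)) := hGi.mono (by simp)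
  have h1sp : X.col one ∉ Submodule.span ℝ (X.col '' (A : Set (Fin n))) := by
    rw [Finset.coe_insert] at hGi
    exact hGi.notMem_span_of_insert (by simpa using h1A)
  intro hcon
  have h0sp : X.col zero ∈ Submodule.span ℝ (X.col '' (A : Set (Fin n))) := by
    by_contra h
    refine (minorOn_ne_zero_iff X (card_ins h0A)).2 ?_ hcon
    rw [Finset.coe_insert]
    exact hAi.insert h
  obtain ⟨c, hc1, hcsp⟩ : ∃ c, one < c ∧
      X.col c ∉ Submodule.span ℝ (X.col '' (A : Set (Fin n))) := by
    by_contra! h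
    refine h1sp (Submodule.span_le.2 ?_ hone')
    rintro _ ⟨c, hc, rfl⟩
    by_cases hc0 : c = zero
    · rw [hc0]; exact h0sp
    · exact h c (lt_of_le_of_ne (hz' c hc0) (Ne.symm hc))
  have hcA : c ∉ A := fun h => hcsp (Submodule.subset_span ⟨c, h, rfl⟩)
  have hjc : jf < c := (lt_of_notMem_span_greedy hgreedy hAlo hone hc1
    fun h => hcsp (Submodule.span_mono (Set.image_mono fun g hg => hg.1) h)).1
  have hcmin : minorOn X (insert c A) ≠ 0 := by
    rw [minorOn_ne_zero_iff X (card_ins hcA), Finset.coe_insert]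
    exact hAi.insert hcsp
  set L := A.erase jf with hLdef
  have hLA : insert jf L = A := Finset.insert_erase hjf
  have hL : L.card = m := by rw [hLdef, Finset.card_erase_of_mem hjf, hA]; rfl
  have hsub : ∀ {x}, x ∉ A → x ∉ L := fun h h' => h (Finset.mem_of_mem_erase h')
  have hjL : jf ∉ L := Finset.notMem_erase _ _
  have hj1 : one < jf := hAlo _ hjf
  obtain ⟨b, hb, hbC, hbs⟩ := hGi.exists_notMem_span_diff
    (B' := (insert one A).filter (· ≤ jf)) (Finset.filter_subset _ _) (C := Set.Ico one jf)
    (u := X.col zero) (by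
      simpa using col_zero_mem_span_greedy hgreedy hzero) hzero'
  have hbj : b = jf := by
    rw [Finset.mem_filter, Finset.mem_insert] at hb
    by_contra hne
    refine hbC ⟨?_, lt_of_le_of_ne hb.2 hne⟩
    rcases hb.1 with h | h
    · exact h.ge
    · exact (hAlo _ h).le
  subst hbj
  have h01 : minorOn X (insert zero (insert one L)) ≠ 0 := by
    have e : ((insert one A : Finset (Fin n)) : Set (Fin n)) \ {b} = (insert one L : Finset _) := by
      rw [← Finset.coe_erase, Finset.erase_insert_of_ne hj1.ne]
    rw [e] at hbs
    rw [minorOn_ne_zero_iff, Finset.coe_insert]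
    · refine (hGi.mono ?_).insert hbs
      rw [← e]; exact Set.sdiff_subset
    · rw [Finset.card_insert_of_notMem, Finset.card_insert_of_notMem (hsub h1A), hL]
      simp [hz.ne, hsub h0A]
  have hpl := minorOn_pluecker X hL hz hj1 hjc (hsub h0A) (hsub h1A) hjL (hsub hcA)
  rw [Finset.insert_comm b c L, hLA, hcon, zero_mul] at hpl
  have hcard2 : ∀ {x y : Fin n}, x ≠ y → x ∉ L → y ∉ L → (insert x (insert y L)).card = m + 2 := by
    intro x y hxy hx hy
    rw [Finset.card_insert_of_notMem (by simp [hxy, hx]), Finset.card_insert_of_notMem hy, hL]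
  have p1 := (hnn _ (hcard2 hz.ne (hsub h0A) (hsub h1A))).lt_of_ne' h01
  have p2 := (hnn _ (card_ins hcA)).lt_of_ne' hcmin
  have p3 := hnn _ (hcard2 (hz.trans hc1).ne (hsub h0A) (hsub hcA))
  have p4 := hnn _ (card_ins h1A)
  have := mul_pos p1 p2
  have := mul_nonneg p3 p4
  linarith

theorem minorOn_mul_le_of_greedy
    (hnn : ∀ S : Finset (Fin n), S.card = m + 2 → 0 ≤ minorOn X S)
    (hz : zero < one)
    (hgreedy : ∀ c, one ≤ c →
      X.col c ∈ Submodule.span ℝ (X.col '' {g | g ∈ insert one A ∧ g ≤ c}))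
    (hAlo : ∀ x ∈ A, one < x) (hA : A.card = m + 1)
    (hzA : minorOn X (insert zero A) ≠ 0)
    (hzero : X.col zero ∈ Submodule.span ℝ (X.col '' Set.Icc one jf))
    (hone : ∀ c, X.col one ∈ Submodule.span ℝ (X.col '' Set.Ioc one c) → jf < c)
    (J : Finset (Fin n)) (hJ : J.card = m + 1) (hJlo : ∀ x ∈ J, one < x)
    (hzJ : minorOn X (insert zero J) ≠ 0) :
    minorOn X (insert zero J) * minorOn X (insert one A) ≤
      minorOn X (insert zero A) * minorOn X (insert one J) := by
  induction hd : (A \ J).card using Nat.strong_induction_on generalizing J with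
  | _ d ih =>
  have h0A : zero ∉ A := fun h => (hAlo _ h).not_gt hz
  have h0J : zero ∉ J := fun h => (hJlo _ h).not_gt hz
  have h1J : one ∉ J := fun h => lt_irrefl _ (hJlo _ h)
  by_cases hAJ : A ⊆ J
  · rw [Finset.eq_of_subset_of_card_le hAJ (hJ.trans hA.symm).le]
  have hne : (A \ J).Nonempty := Finset.sdiff_nonempty.2 hAJ
  obtain ⟨a, ha, hamin⟩ := Finset.exists_minimal hne
  have hlow : ∀ x ∈ A, x < a → x ∈ J := by
    intro x hx hxa
    by_contra hxJ
    exact hxa.not_ge (hamin (Finset.mem_sdiff.2 ⟨hx, hxJ⟩) hxa.le)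
  rw [Finset.mem_sdiff] at ha
  have h0Jc : (insert zero J).card = m + 2 := by rw [Finset.card_insert_of_notMem h0J, hJ]
  have hzJi := (minorOn_ne_zero_iff X h0Jc).1 hzJ
  have hzAi := (minorOn_ne_zero_iff X
    (by rw [Finset.card_insert_of_notMem h0A, hA])).1 hzA
  have hJi : LinearIndepOn ℝ X.col (J : Set (Fin n)) := hzJi.mono (by simp)
  have h0Jsp : X.col zero ∉ Submodule.span ℝ (X.col '' (J : Set (Fin n))) := by
    have := hzJi
    rw [Finset.coe_insert] at this
    exact this.notMem_span_of_insert (by simpa using h0J)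
  have hgt : ∀ b ∈ J, b ∉ A → a < b := by
    intro b hb hbA
    by_contra hle
    have hba : b < a := lt_of_le_of_ne (not_lt.1 hle) fun h => hbA (h ▸ ha.1)
    have hsub : {g | g ∈ A ∧ g ≤ b} ⊆ (J : Set (Fin n)) \ {b} := fun g hg =>
      ⟨hlow g hg.1 (hg.2.trans_lt hba),
        fun h => hbA (by rw [← Set.mem_singleton_iff.1 h]; exact hg.1)⟩
    obtain ⟨hjb, h1sp⟩ := lt_of_notMem_span_greedy hgreedy hAlo hone (hJlo b hb)
      fun h => hJi.notMem_span hb (Submodule.span_mono (Set.image_mono hsub) h)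
    refine h0Jsp (Submodule.span_le.2 ?_ (col_zero_mem_span_greedy hgreedy hzero))
    rintro _ ⟨g, ⟨hg, hgj⟩, rfl⟩
    rcases Finset.mem_insert.1 hg with rfl | hg
    · refine Submodule.span_mono (Set.image_mono ?_) h1sp
      exact Set.insert_subset hb (hsub.trans Set.sdiff_subset)
    · exact Submodule.subset_span ⟨g, hlow g hg (hgj.trans_lt (hjb.trans hba)), rfl⟩
  have ha0 : a ≠ zero := fun h => h0A (h ▸ ha.1)
  obtain ⟨b, hb, hbC, hbs⟩ := hzJi.exists_notMem_span_diff subset_rfl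
    (C := insert zero ((A : Set (Fin n)) \ {a})) (u := X.col a) (by
      have := hzJi.linearIndependent.span_eq_top_of_card_eq_finrank' (by simp [h0Jc])
      rw [← Set.image_eq_range] at this
      rw [this]; trivial) (by
      intro h
      refine hzAi.notMem_span (i := a) (by simp [ha.1])
        (Submodule.span_mono (Set.image_mono ?_) h)
      rintro x (rfl | hx)
      · exact ⟨by simp, ha0.symm⟩
      · exact ⟨by simpa using Or.inr hx.1, hx.2⟩)
  have hb0 : b ≠ zero := fun h => hbC (h ▸ Set.mem_insert _ _)
  have hbJ : b ∈ J := (Finset.mem_insert.1 hb).resolve_left hb0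
  have hbA : b ∉ A := fun h => hbC (Set.mem_insert_of_mem _ ⟨h, fun h' => ha.2 (h' ▸ hbJ)⟩)
  have hab := hgt b hbJ hbA
  set L := J.erase b with hLdef
  have hLJ : insert b L = J := Finset.insert_erase hbJ
  have hL : L.card = m := by rw [hLdef, Finset.card_erase_of_mem hbJ, hJ]; rfl
  have hsub : ∀ {x}, x ∉ J → x ∉ L := fun h h' => h (Finset.mem_of_mem_erase h')
  have hbL : b ∉ L := Finset.notMem_erase _ _
  have h1a := hAlo a ha.1
  have hcard2 : ∀ {x y : Fin n}, x ≠ y → x ∉ L → y ∉ L → (insert x (insert y L)).card = m + 2 := by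
    intro x y hxy hx hy
    rw [Finset.card_insert_of_notMem (by simp [hxy, hx]), Finset.card_insert_of_notMem hy, hL]
  have hzJ' : minorOn X (insert zero (insert a L)) ≠ 0 := by
    rw [minorOn_ne_zero_iff X (hcard2 ha0.symm (hsub h0J) (hsub ha.2)), Finset.insert_comm,
      Finset.coe_insert]
    have e : ((insert zero J : Finset (Fin n)) : Set (Fin n)) \ {b} = (insert zero L : Finset _) := by
      rw [← Finset.coe_erase, Finset.erase_insert_of_ne hb0.symm]
    rw [← e]
    exact (hzJi.mono Set.sdiff_subset).insert hbs
  have hih := ih ((A \ insert a L).card) (by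
      rw [← hd]
      refine Finset.card_lt_card (Finset.ssubset_iff_of_subset ?_ |>.2
        ⟨a, Finset.mem_sdiff.2 ha, by simp⟩)
      intro x hx
      rw [Finset.mem_sdiff, Finset.mem_insert, not_or] at hx
      refine Finset.mem_sdiff.2 ⟨hx.1, fun hxJ => hx.2.2 ?_⟩
      exact Finset.mem_erase.2 ⟨fun h => hbA (h ▸ hx.1), hxJ⟩)
    (insert a L) (by rw [Finset.card_insert_of_notMem (hsub ha.2), hL])
    (by
      intro x hx
      rcases Finset.mem_insert.1 hx with rfl | hx
      · exact h1a
      · exact hJlo x (Finset.mem_of_mem_erase hx)) hzJ' rfl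
  have hpl := minorOn_pluecker X hL hz h1a hab (hsub h0J) (hsub h1J) (hsub ha.2) hbL
  rw [hLJ] at hpl
  have p1 := (hnn _ (hcard2 ha0.symm (hsub h0J) (hsub ha.2))).lt_of_ne' hzJ'
  have p2 := hnn _ (hcard2 hz.ne (hsub h0J) (hsub h1J))
  have p3 := hnn (insert a J) (by rw [Finset.card_insert_of_notMem ha.2, hJ])
  have p4 := hnn _ h0Jc
  have p5 := hnn (insert zero A) (by rw [Finset.card_insert_of_notMem h0A, hA])
  have p6 := mul_nonneg p2 p3
  refine le_of_mul_le_mul_left ?_ p1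
  calc _ = minorOn X (insert zero J) *
        (minorOn X (insert zero (insert a L)) * minorOn X (insert one A)) := by ring
    _ ≤ minorOn X (insert zero J) *
        (minorOn X (insert zero A) * minorOn X (insert one (insert a L))) :=
      mul_le_mul_of_nonneg_left hih p4
    _ = minorOn X (insert zero A) *
        (minorOn X (insert zero J) * minorOn X (insert one (insert a L))) := by ring
    _ ≤ minorOn X (insert zero A) *
        (minorOn X (insert zero (insert a L)) * minorOn X (insert one J)) :=
      mul_le_mul_of_nonneg_left (by linarith) p5
    _ = _ := by ring

end Bridge

theorem colP_natCast {k n : ℕ} (X : Matrix (Fin k) (Fin n) ℝ) (x : Fin n) :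
    colP X ((x : ℕ) : ℤ) = X.col x := by
  have h : (((x : ℕ) : ℤ) % (n : ℤ)).toNat = x := by
    rw [← Int.natCast_mod, Nat.mod_eq_of_lt x.isLt, Int.toNat_natCast]
  funext r
  simp [colP, h, Matrix.col]

theorem colP_natCast_self {k n : ℕ} (X : Matrix (Fin k) (Fin n) ℝ) {zero : Fin n}
    (hzero : (zero : ℕ) = 0) : colP X (n : ℤ) = X.col zero := by
  rw [← colP_natCast, hzero]
  funext r
  simp [colP]

theorem fX_mem {k n : ℕ} {X : Matrix (Fin k) (Fin n) ℝ} {i : ℤ} (h : fX X i ≠ 0) :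
    colP X i ∈ Submodule.span ℝ (colP X '' Set.Ioc i (fX X i)) := by
  have hne : {j : ℤ | i ≤ j ∧ colP X i ∈ Submodule.span ℝ (colP X '' Set.Ioc i j)}.Nonempty := by
    by_contra hemp
    refine h ?_
    rw [fX, Set.not_nonempty_iff_eq_empty.1 hemp, Int.csInf_empty]
  exact (Int.csInf_mem hne ⟨i, fun j hj => hj.1⟩).2

theorem fX_le {k n : ℕ} {X : Matrix (Fin k) (Fin n) ℝ} {i j : ℤ} (hij : i ≤ j)
    (h : colP X i ∈ Submodule.span ℝ (colP X '' Set.Ioc i j)) : fX X i ≤ j := by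
  rw [fX]
  exact csInf_le ⟨i, fun _ hj => hj.1⟩ ⟨hij, h⟩

theorem stmt11 (k n : ℕ) (hk : 2 ≤ k) (X : Matrix (Fin k) (Fin n) ℝ)
    (hX : IsTNN X)
    (h1 : 1 < fX X 0) (h2 : fX X 0 < fX X 1) (h3 : fX X 1 < (n:ℤ) + 1)
    (zero one jf : Fin n) (hzero : (zero:ℕ) = 0) (hone : (one:ℕ) = 1)
    (hjf : ((jf:ℕ):ℤ) = fX X 0)
    (I : Finset (Fin n)) (hIcard : I.card = k - 2)
    (hIlo : ∀ x ∈ I, 2 ≤ (x:ℕ)) (hjfI : jf ∉ I)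
    (hne : minorOn X (insert one (insert jf I)) ≠ 0)
    (hlex : ∀ K : Finset (Fin n), K.card = k → minorOn X K ≠ 0 →
      lexLE one (insert one (insert jf I)) K) :
    minorOn X (insert zero (insert jf I)) ≠ 0 ∧
    ∀ J : Finset (Fin n), J.card = k - 1 → (∀ x ∈ J, 2 ≤ (x:ℕ)) →
      minorOn X (insert zero J) ≠ 0 →
      minorOn X (insert zero J) * minorOn X (insert one (insert jf I)) ≤
        minorOn X (insert zero (insert jf I)) * minorOn X (insert one J) := by
  obtain ⟨m, rfl⟩ : ∃ m, k = m + 2 := ⟨k - 2, by omega⟩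
  have lt_iff : ∀ x : Fin n, one < x ↔ 2 ≤ (x : ℕ) := fun x => by rw [Fin.lt_def, hone]; omega
  have hz : zero < one := by rw [Fin.lt_def]; omega
  have hz' : ∀ x, x ≠ zero → one ≤ x := fun x hx => by
    rw [Fin.le_def, hone]
    rw [Ne, Fin.ext_iff] at hx
    omega
  have col0 : colP X 0 = X.col zero := by rw [← colP_natCast, hzero]; rfl
  have col1 : colP X 1 = X.col one := by rw [← colP_natCast, hone]; rfl
  have toFin : ∀ z : ℤ, 0 ≤ z → z < n → ∃ x : Fin n, ((x : ℕ) : ℤ) = z := fun z h0 hn =>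
    ⟨⟨z.toNat, by omega⟩, by simp [h0]⟩
  set A := insert jf I with hAdef
  have hA : A.card = m + 1 := by rw [hAdef, Finset.card_insert_of_notMem hjfI, hIcard]; rfl
  have hAlo : ∀ x ∈ A, one < x := by
    intro x hx
    rw [lt_iff]
    rcases Finset.mem_insert.1 hx with rfl | hx
    · omega
    · exact hIlo x hx
  have hGc : (insert one A).card = m + 2 := by
    rw [Finset.card_insert_of_notMem (fun h => lt_irrefl _ (hAlo _ h)), hA]
  have hgreedy : ∀ c, one ≤ c →
      X.col c ∈ Submodule.span ℝ (X.col '' {g | g ∈ insert one A ∧ g ≤ c}) := fun c hc =>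
    mem_span_of_lexLE hone hGc hne hlex (by rw [Fin.le_def] at hc; omega)
  have hzero_mem : X.col zero ∈ Submodule.span ℝ (X.col '' Set.Icc one jf) := by
    rw [← col0]
    refine Submodule.span_mono ?_ (fX_mem (X := X) (i := 0) (by omega))
    rintro _ ⟨z, ⟨hz0, hzj⟩, rfl⟩
    obtain ⟨x, rfl⟩ := toFin z hz0.le (by omega)
    refine ⟨x, ⟨?_, ?_⟩, (colP_natCast X x).symm⟩ <;> rw [Fin.le_def] <;> omega
  have hzero_notMem : X.col zero ∉ Submodule.span ℝ (X.col '' Set.Ico one jf) := by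
    intro h
    have := fX_le (X := X) (i := 0) (j := fX X 0 - 1) (by omega) (by
      rw [col0]
      refine Submodule.span_mono ?_ h
      rintro _ ⟨x, ⟨hx1, hxj⟩, rfl⟩
      rw [Fin.le_def] at hx1
      rw [Fin.lt_def] at hxj
      exact ⟨(x : ℕ), ⟨by omega, by omega⟩, colP_natCast X x⟩)
    omega
  have hone_lt : ∀ c, X.col one ∈ Submodule.span ℝ (X.col '' Set.Ioc one c) → jf < c := by
    intro c hc
    have hle : fX X 1 ≤ max 1 ((c : ℕ) : ℤ) := fX_le (le_max_left _ _) (by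
      rw [col1]
      refine Submodule.span_mono ?_ hc
      rintro _ ⟨x, ⟨hx1, hxc⟩, rfl⟩
      rw [Fin.le_def] at hxc
      rw [Fin.lt_def] at hx1
      exact ⟨(x : ℕ), ⟨by omega, by omega⟩, colP_natCast X x⟩)
    rw [Fin.lt_def]
    omega
  have hone_mem : X.col one ∈ Submodule.span ℝ (X.col '' {x | x ≠ one}) := by
    rw [← col1]
    refine Submodule.span_mono ?_ (fX_mem (X := X) (i := 1) (by omega))
    rintro _ ⟨z, ⟨hz0, hzj⟩, rfl⟩
    rcases lt_or_eq_of_le (show z ≤ n by omega) with hzn | rfl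
    · obtain ⟨x, rfl⟩ := toFin z (by omega) hzn
      refine ⟨x, ?_, (colP_natCast X x).symm⟩
      rintro rfl
      omega
    · exact ⟨zero, hz.ne, (colP_natCast_self X hzero).symm⟩
  have hzA : minorOn X (insert zero A) ≠ 0 :=
    minorOn_insert_zero_ne_zero hX.2 hz hz' hgreedy hAlo hA (Finset.mem_insert_self _ _) hne
      hzero_mem hzero_notMem hone_lt hone_mem
  exact ⟨hzA, fun J hJ hJlo hzJ => minorOn_mul_le_of_greedy hX.2 hz hgreedy hAlo hA hzA hzero_mem
    hone_lt J hJ (fun x hx => (lt_iff x).2 (hJlo x hx)) hzJ⟩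

end
end
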